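/- Let d ≥ 3 and ε ∈ (0,1), fix 1 ≤ r_N ≤ N^{1−ε}, and let A = B(0,r_N) ⊂ T. There exist constants c, c′ > 0 depending only on d and ε such that for every nonempty V ⊆ A and all N ≥ 2: | N^d / ( E[H_V] · cap(𝖵) ) − 1 | ≤ c N^{−c′}, where 𝖵 = φ(V). -/

import Mathlib

open MeasureTheory Filter Classical
open scoped ENNReal NNReal

noncomputable section

namespace Frag

/-! ### Graph-theoretic basics -/

/-- Two vertices of `Fin d → R` are adjacent if they differ in exactly one
coordinate, by `±1` (Euclidean distance one). -/
def adj {d : ℕ} {R : Type*} [AddGroupWithOne R] (x y : Fin d → R) : Prop :=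
  x ≠ y ∧ ∃ i : Fin d, (y i = x i + 1 ∨ x i = y i + 1) ∧ ∀ j : Fin d, j ≠ i → x j = y j

/-- The discrete torus `(ℤ/Nℤ)^d`. -/
abbrev Torus (d N : ℕ) := Fin d → ZMod N

/-- The lattice `ℤ^d`. -/
abbrev Lat (d : ℕ) := Fin d → ℤ

instance (n : ℕ) : MeasurableSpace (ZMod n) := ⊤

/-- The `ℓ∞`-distance on the torus. -/
def torusDist {d N : ℕ} (x y : Torus d N) : ℕ :=
  Finset.univ.sup fun i : Fin d => min (x i - y i).val (y i - x i).val

/-- The `ℓ∞`-distance on the lattice. -/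
def latDist {d : ℕ} (x y : Lat d) : ℕ :=
  Finset.univ.sup fun i : Fin d => (x i - y i).natAbs

/-- Closed `ℓ∞`-ball in the torus. -/
def torusBall {d N : ℕ} (x : Torus d N) (r : ℝ) : Set (Torus d N) :=
  {y | (torusDist x y : ℝ) ≤ r}

/-- Closed `ℓ∞`-ball in the lattice. -/
def latBall {d : ℕ} (x : Lat d) (r : ℝ) : Set (Lat d) :=
  {y | (latDist x y : ℝ) ≤ r}

/-- `x` and `y` are connected by a nearest-neighbour path staying in `S`. -/
def connectedIn {α : Type*} (rel : α → α → Prop) (S : Set α) (x y : α) : Prop :=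
  ∃ (n : ℕ) (p : ℕ → α), p 0 = x ∧ p n = y ∧ (∀ k, k ≤ n → p k ∈ S) ∧
    ∀ k, k < n → rel (p k) (p (k + 1))

/-- The connected component of `x` inside `S`. -/
def compOf {α : Type*} (rel : α → α → Prop) (S : Set α) (x : α) : Set α :=
  {y | connectedIn rel S x y}

/-- `S` is a connected set. -/
def IsConnSet {α : Type*} (rel : α → α → Prop) (S : Set α) : Prop :=
  ∀ x ∈ S, ∀ y ∈ S, connectedIn rel S x y

/-- External vertex boundary. -/
def extBdry {α : Type*} (rel : α → α → Prop) (S : Set α) : Set α :=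
  {y | y ∉ S ∧ ∃ x ∈ S, rel x y}

/-- Internal vertex boundary. -/
def intBdry {α : Type*} (rel : α → α → Prop) (S : Set α) : Set α :=
  {x | x ∈ S ∧ ∃ y, y ∉ S ∧ rel x y}

/-- The cardinality of the largest connected component of `S`. -/
def maxCompSize {α : Type*} (rel : α → α → Prop) (S : Set α) : ℕ :=
  sSup {n | ∃ x ∈ S, n = (compOf rel S x).ncard}

/-- The diameter of a set with respect to a distance. -/
def diamOf {α : Type*} (dist : α → α → ℕ) (S : Set α) : ℕ :=
  sSup {n | ∃ x ∈ S, ∃ y ∈ S, n = dist x y}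

/-- The canonical graph isomorphism `φ` from `B(0, N/4) ⊆ (ℤ/Nℤ)^d` onto
`B(0, N/4) ⊆ ℤ^d`, given by the signed representative of each coordinate. -/
def torusToLat {d N : ℕ} (x : Torus d N) : Lat d :=
  fun i => if ((x i).val : ℝ) ≤ (N : ℝ) / 2 then ((x i).val : ℤ) else ((x i).val : ℤ) - (N : ℤ)

/-! ### Discrete-time simple random walk -/

/-- One-step transition probability of the simple random walk. -/
def srwStep {d : ℕ} {R : Type*} [AddGroupWithOne R] (x y : Fin d → R) : ℝ≥0∞ :=
  if adj x y then ((2 * d : ℕ) : ℝ≥0∞)⁻¹ else 0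

/-- `μ` is the law on path space of the discrete-time simple random walk with
initial distribution `init`, characterized by its cylinder probabilities. -/
def IsWalkLaw {d : ℕ} {R : Type*} [AddGroupWithOne R] [MeasurableSpace R]
    (μ : Measure (ℕ → (Fin d → R))) (init : (Fin d → R) → ℝ≥0∞) : Prop :=
  IsProbabilityMeasure μ ∧
  ∀ (n : ℕ) (w : ℕ → (Fin d → R)),
    μ {ω | ∀ k, k ≤ n → ω k = w k} =
      init (w 0) * ∏ k ∈ Finset.range n, srwStep (w k) (w (k + 1))

/-- The uniform initial distribution on the torus. -/
def unifInit (d N : ℕ) : Torus d N → ℝ≥0∞ := fun _ => ((N : ℝ≥0∞) ^ d)⁻¹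

/-- The initial distribution concentrated at `x`. -/
def pointInit {α : Type*} (x : α) : α → ℝ≥0∞ := fun y => if y = x then 1 else 0

/-- The set of sites visited in the first `t` steps. -/
def visited {α : Type*} (t : ℕ) (ω : ℕ → α) : Set α := {v | ∃ k, k ≤ t ∧ ω k = v}

/-! ### Capacity and random interlacements on `ℤ^d` -/

/-- The event that the walk never returns to `V` after time `0`. -/
def escEvent {d : ℕ} (V : Set (Lat d)) : Set (ℕ → Lat d) :=
  {w | ∀ n, 1 ≤ n → w n ∉ V}

/-- `r` is the (simple random walk) capacity of `V ⊆ ℤ^d`: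
`r = Σ_{x ∈ V} P_x[H̃_V = ∞]`. -/
def IsCap (d : ℕ) (V : Set (Lat d)) (r : ℝ) : Prop :=
  ∃ μ : Lat d → Measure (ℕ → Lat d),
    (∀ x, IsWalkLaw (μ x) (pointInit x)) ∧
    r = ∑ᶠ x ∈ V, ((μ x) (escEvent V)).toReal

/-- `I` is a random interlacement at level `u` on the probability space `(Ω, P)`:
for every finite `V ⊆ ℤ^d`, `P[I ∩ V = ∅] = exp (−u · cap V)`. -/
def IsInterlacement (d : ℕ) (u : ℝ) {Ω : Type*} [MeasurableSpace Ω]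
    (P : Measure Ω) (I : Ω → Set (Lat d)) : Prop :=
  IsProbabilityMeasure P ∧
  (∀ x : Lat d, MeasurableSet {ω | x ∈ I ω}) ∧
  ∀ V : Set (Lat d), V.Finite → ∀ r : ℝ, IsCap d V r →
    P {ω | ∀ x ∈ V, x ∉ I ω} = ENNReal.ofReal (Real.exp (-u * r))

/-- `e = η(u)`, the probability that the origin lies in an infinite component of
the vacant set `V^u = ℤ^d ∖ I^u` of a random interlacement at level `u`. -/
def IsEta (d : ℕ) (u e : ℝ) : Prop :=
  ∃ (Ω : Type) (_ : MeasurableSpace Ω) (P : Measure Ω) (I : Ω → Set (Lat d)),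
    IsInterlacement d u P I ∧
    e = (P {ω | (compOf adj ((I ω)ᶜ) (0 : Lat d)).Infinite}).toReal

/-- The critical level `u_* = inf {u ≥ 0 : η(u) = 0}`. -/
def uStar (d : ℕ) : ℝ := sInf {u | 0 ≤ u ∧ IsEta d u 0}

/-- The probability of an event `E` about a random interlacement at level `u`. -/
def intProb (d : ℕ) (u : ℝ) (E : Set (Lat d) → Prop) : ℝ :=
  sSup {p | ∃ (Ω : Type) (_ : MeasurableSpace Ω) (P : Measure Ω) (I : Ω → Set (Lat d)),
    IsInterlacement d u P I ∧ p = (P {ω | E (I ω)}).toReal}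

/-- The event that `B(0,L)` is connected to the external boundary of `B(0,2L)`
by a nearest-neighbour path in `S`. -/
def connAcross (d L : ℕ) (S : Set (Lat d)) : Prop :=
  ∃ x ∈ latBall (0 : Lat d) (L : ℝ), ∃ y ∈ extBdry adj (latBall (0 : Lat d) (2 * (L : ℝ))),
    connectedIn adj S x y

/-- The critical level `u_** = inf {u ≥ 0 : α(u) > 0}`. -/
def uStarStar (d : ℕ) : ℝ :=
  sInf {u | 0 ≤ u ∧ ∃ a : ℝ, 0 < a ∧
    Tendsto (fun L : ℕ => (L : ℝ) ^ a * intProb d u fun I => connAcross d L Iᶜ)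
      atTop (nhds 0)}

/-- `u` is a strongly supercritical level for random interlacements on `ℤ^d`. -/
def StronglySupercritical (d : ℕ) (u : ℝ) : Prop :=
  ∃ μ : ℝ, 0 < μ ∧
  ∃ (Ω : Type) (_ : MeasurableSpace Ω) (P : Measure Ω) (I : ℝ → Ω → Set (Lat d)),
    (∀ v : ℝ, 0 ≤ v → IsInterlacement d v P (I v)) ∧
    (∀ v v' : ℝ, v ≤ v' → ∀ ω, I v ω ⊆ I v' ω) ∧
    ∃ N₀ : ℕ, ∀ N : ℕ, N₀ ≤ N →
      (1 - Real.exp (-(N : ℝ) ^ μ) ≤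
        (P {ω | ∃ x ∈ latBall (0 : Lat d) (N : ℝ),
          (compOf adj ((I (u * (1 + μ)) ω)ᶜ) x).Infinite}).toReal) ∧
      (1 - Real.exp (-(N : ℝ) ^ μ) ≤
        (P {ω | ∀ S₁ S₂ : Set (Lat d),
            S₁ ⊆ (I (u * (1 - μ)) ω)ᶜ ∩ latBall 0 (N : ℝ) →
            S₂ ⊆ (I (u * (1 - μ)) ω)ᶜ ∩ latBall 0 (N : ℝ) →
            IsConnSet adj S₁ → IsConnSet adj S₂ →
            (N : ℝ) / 8 ≤ (diamOf latDist S₁ : ℝ) →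
            (N : ℝ) / 8 ≤ (diamOf latDist S₂ : ℝ) →
            ∃ x ∈ S₁, ∃ y ∈ S₂,
              connectedIn adj ((I (u * (1 + μ)) ω)ᶜ ∩ latBall 0 (2 * (N : ℝ))) x y}).toReal)

/-! ### Continuous-time walk -/

/-- Sample space for the continuous-time walk: a discrete path together with
the i.i.d. exponential interarrival gaps of the driving Poisson process. -/
abbrev CTPath (d N : ℕ) := (ℕ → Torus d N) × (ℕ → ℝ)

/-- The number of jumps performed up to time `t`. -/
def nJumps (g : ℕ → ℝ) (t : ℝ) : ℕ := sSup {n | ∑ k ∈ Finset.range n, g k ≤ t}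

/-- The position of the continuous-time walk at time `t`. -/
def ctPos {d N : ℕ} (ω : CTPath d N) (t : ℝ) : Torus d N := ω.1 (nJumps ω.2 t)

/-- `ν` is the law of an i.i.d. sequence of exponential random variables of
parameter `1`, characterized by its joint survival function. -/
def IsIIDExp (ν : Measure (ℕ → ℝ)) : Prop :=
  IsProbabilityMeasure ν ∧
  ∀ (n : ℕ) (s : ℕ → ℝ), (∀ k, 0 ≤ s k) →
    ν {g | ∀ k, k ≤ n → s k < g k} =
      ENNReal.ofReal (Real.exp (-(∑ k ∈ Finset.range (n + 1), s k)))

/-- `P` is the law of the continuous-time simple random walk `Y_t = X_{N_t}`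
with initial distribution `init`. -/
def IsCTWalk {d N : ℕ} (P : Measure (CTPath d N)) (init : Torus d N → ℝ≥0∞) : Prop :=
  ∃ (μ : Measure (ℕ → Torus d N)) (ν : Measure (ℕ → ℝ)),
    IsWalkLaw μ init ∧ IsIIDExp ν ∧ P = μ.prod ν

/-- The entrance time `H_V = inf {t ≥ 0 : Y_t ∈ V}`. -/
def hitT {d N : ℕ} (V : Set (Torus d N)) (ω : CTPath d N) : ℝ :=
  sInf {t | 0 ≤ t ∧ ctPos ω t ∈ V}

/-- The entrance time to `V` after time `s`. -/
def hitTAfter {d N : ℕ} (V : Set (Torus d N)) (ω : CTPath d N) (s : ℝ) : ℝ :=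
  sInf {t | s ≤ t ∧ ctPos ω t ∈ V}

/-- The exit time `T_V = inf {t ≥ 0 : Y_t ∉ V}`. -/
def exitT {d N : ℕ} (V : Set (Torus d N)) (ω : CTPath d N) : ℝ :=
  sInf {t | 0 ≤ t ∧ ctPos ω t ∉ V}

/-- The regeneration time `t_* = (N log N)^2`. -/
def tstar (N : ℕ) : ℝ := ((N : ℝ) * Real.log N) ^ 2

/-- The first time `t ≥ s + t_*` such that the walk has avoided `B` during the
whole interval `[t − t_*, t]`. -/
def uEndAfter {d N : ℕ} (B : Set (Torus d N)) (ω : CTPath d N) (s : ℝ) : ℝ :=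
  sInf {t | s + tstar N ≤ t ∧ ∀ r, t - tstar N ≤ r → r ≤ t → ctPos ω r ∉ B}

/-- The successive excursion times `(R_k, U_k)` between `A` and (long absences
from) `B`, with the convention `(R_0, U_0) = (0, 0)`. -/
def excTimes {d N : ℕ} (A B : Set (Torus d N)) (ω : CTPath d N) : ℕ → ℝ × ℝ
  | 0 => (0, 0)
  | k + 1 =>
      let R := hitTAfter A ω (excTimes A B ω k).2
      (R, uEndAfter B ω R)

/-- The range of the continuous-time walk during the time interval `[a, b]`. -/
def ctRange {d N : ℕ} (ω : CTPath d N) (a b : ℝ) : Set (Torus d N) :=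
  {v | ∃ t, a ≤ t ∧ t ≤ b ∧ ctPos ω t = v}

/-! ### The killed walk and the quasistationary distribution -/

/-- The action of the substochastic matrix `P^B` (walk killed on `B`) on a
vector `v`. -/
def killedMul (d N : ℕ) (B : Set (Torus d N)) (v : Torus d N → ℝ) (x : Torus d N) : ℝ :=
  ∑ᶠ y : Torus d N, if y ∉ B ∧ adj x y then v y / (2 * d) else 0

/-- `l` is an eigenvalue of the killed transition matrix `P^B`. -/
def IsKilledEigenvalue (d N : ℕ) (B : Set (Torus d N)) (l : ℝ) : Prop :=
  ∃ v : Torus d N → ℝ, v ≠ 0 ∧ (∀ x ∈ B, v x = 0) ∧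
    ∀ x, x ∉ B → killedMul d N B v x = l * v x

/-- `σ` is the quasistationary distribution on `T ∖ B`: the normalized
non-negative principal (Perron–Frobenius) eigenvector of `P^B`. -/
def IsQSD (d N : ℕ) (B : Set (Torus d N)) (σ : Torus d N → ℝ) : Prop :=
  (∀ x, 0 ≤ σ x) ∧ (∀ x ∈ B, σ x = 0) ∧ (∑ᶠ x, σ x = 1) ∧
  ∃ l : ℝ, (∀ x, x ∉ B → killedMul d N B σ x = l * σ x) ∧
    ∀ l', IsKilledEigenvalue d N B l' → l' ≤ l

/-- The Dirichlet form of the simple random walk on the torus. -/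
def dirichlet (d N : ℕ) (g : Torus d N → ℝ) : ℝ :=
  (1 / 2) * ∑ᶠ x : Torus d N, ∑ᶠ y : Torus d N,
    if adj x y then (g x - g y) ^ 2 / (2 * d * (N : ℝ) ^ d) else 0

end Frag

namespace Frag

/-!
Let `u x` be the expected number of steps the walk on the torus needs to reach `V`, let `H` be the
mean of `u`, and let `e` be the escape probabilities of the lift `W = φ(V)`, so that
`∑ x ∈ W, e x = cap W`. One step of the walk gives `u - P u = 1 - 1_V r`, where `r` is the expected
return time to `V`, and `∑ y ∈ V, r y = N ^ d` by Kac's formula. Summing along the lazy walk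
`Q = (1 + P) / 2`, whose Green function up to time `t` we denote by `G_t`, yields on `V`
  `2 Q ^ t u = ∑ y ∈ V, r y * G_t(·, y) - t`.
Choose `t` close to `N ^ (2 + δ)`. This exceeds the mixing time, so the left side is close to
`2 H`. On the other hand `∑ x ∈ V, e x * G_t(x, y)` is close to `2` for every `y ∈ V`: this is the
last-exit decomposition on the lattice, and up to time `t` the Green functions of the torus and the
lattice agree up to a small error. Integrating the identity against `e` gives `cap W * H ≈ N ^ d`;
the term `t * cap W` is negligible because `V` lies in a ball of radius `N ^ (1 - ε)`.
-/

/-! ### Lazy Markov operators -/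

section Lazify

variable {E F : Type*} [AddCommGroup E] [Module ℝ E] [AddCommGroup F] [Module ℝ F]

/-- The lazy version `(1 + P) / 2` of a transition operator `P`, whose walk stays put with
probability `1 / 2` at every step. Unlike `P` itself it never suffers from periodicity. -/
def lazify (P : Module.End ℝ E) : Module.End ℝ E := (2⁻¹ : ℝ) • (1 + P)

theorem lazify_apply (P : Module.End ℝ E) (f : E) : lazify P f = (2⁻¹ : ℝ) • (f + P f) := rfl

theorem one_sub_eq_two_smul_one_sub_lazify (P : Module.End ℝ E) :
    1 - P = (2 : ℝ) • (1 - lazify P) := by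
  rw [lazify, smul_sub, smul_inv_smul₀ two_ne_zero, two_smul]
  abel

theorem sub_map_sum_lazify_pow (P : Module.End ℝ E) (t : ℕ) (f : E) :
    ∑ s ∈ Finset.range t, (lazify P ^ s) f - P (∑ s ∈ Finset.range t, (lazify P ^ s) f) =
      (2 : ℝ) • (f - (lazify P ^ t) f) := by
  have h : (1 - P) * ∑ s ∈ Finset.range t, lazify P ^ s = (2 : ℝ) • (1 - lazify P ^ t) := by
    rw [one_sub_eq_two_smul_one_sub_lazify, smul_mul_assoc, mul_neg_geom_sum]
  simpa using LinearMap.congr_fun h f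

theorem sum_lazify_pow_sub_map (P : Module.End ℝ E) (t : ℕ) (f : E) :
    ∑ s ∈ Finset.range t, (lazify P ^ s) (f - P f) = (2 : ℝ) • (f - (lazify P ^ t) f) := by
  have h : (∑ s ∈ Finset.range t, lazify P ^ s) * (1 - P) = (2 : ℝ) • (1 - lazify P ^ t) := by
    rw [one_sub_eq_two_smul_one_sub_lazify, mul_smul_comm, geom_sum_mul_neg]
  simpa using LinearMap.congr_fun h f

theorem lazify_pow_apply_of_map_eq_smul {P : Module.End ℝ E} {f : E} {l : ℝ} (h : P f = l • f)
    (t : ℕ) : (lazify P ^ t) f = ((1 + l) / 2) ^ t • f := by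
  induction t with
  | zero => simp
  | succ t ih =>
    rw [pow_succ', Module.End.mul_apply, ih, map_smul, lazify_apply, h, pow_succ]
    module

theorem map_lazify_pow {L : E →ₗ[ℝ] F} {P : Module.End ℝ E} {P' : Module.End ℝ F}
    (h : ∀ f, L (P f) = P' (L f)) (t : ℕ) (f : E) :
    L ((lazify P ^ t) f) = (lazify P' ^ t) (L f) := by
  induction t generalizing f with
  | zero => rfl
  | succ t ih =>
    rw [pow_succ, Module.End.mul_apply, ih, lazify_apply, map_smul, map_add, h, ← lazify_apply,
      pow_succ, Module.End.mul_apply]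

end Lazify

section MarkovOperator

variable {α : Type*} {P : Module.End ℝ (α → ℝ)}

/-- Transition operators `P f x = E_x[f(X₁)]` of Markov chains. Continuity is meant for the
product topology, so from every point the chain can jump to finitely many points only. -/
structure IsMarkovOperator (P : Module.End ℝ (α → ℝ)) : Prop where
  monotone : Monotone P
  map_one : P 1 = 1
  continuous : Continuous P

namespace IsMarkovOperator

theorem map_nonneg (hP : IsMarkovOperator P) {f : α → ℝ} (hf : 0 ≤ f) : 0 ≤ P f := by
  simpa using hP.monotone hf

theorem lazify (hP : IsMarkovOperator P) : IsMarkovOperator (lazify P) where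
  monotone f g h :=
    smul_le_smul_of_nonneg_left (a := (2⁻¹ : ℝ)) (add_le_add h (hP.monotone h)) (by norm_num)
  map_one := by
    rw [lazify_apply, hP.map_one, ← two_smul ℝ (1 : α → ℝ), inv_smul_smul₀ two_ne_zero]
  continuous := (continuous_id.add hP.continuous).const_smul (2⁻¹ : ℝ)

theorem pow (hP : IsMarkovOperator P) (t : ℕ) : IsMarkovOperator (P ^ t) := by
  induction t with
  | zero => exact ⟨monotone_id, rfl, continuous_id⟩
  | succ t ih =>
    rw [pow_succ]
    exact ⟨ih.monotone.comp hP.monotone, by rw [Module.End.mul_apply, hP.map_one, ih.map_one],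
      ih.continuous.comp hP.continuous⟩

end IsMarkovOperator

/-- The transition probabilities `q_t(x, y)` of the lazy version of the chain. -/
def heatKernel (P : Module.End ℝ (α → ℝ)) (t : ℕ) (x y : α) : ℝ :=
  (lazify P ^ t) (({y} : Set α).indicator 1) x

theorem heatKernel_nonneg (hP : IsMarkovOperator P) (t : ℕ) (x y : α) :
    0 ≤ heatKernel P t x y :=
  (hP.lazify.pow t).map_nonneg (Set.indicator_nonneg fun _ _ => zero_le_one) x

theorem heatKernel_le_one (hP : IsMarkovOperator P) (t : ℕ) (x y : α) :
    heatKernel P t x y ≤ 1 := by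
  have h := (hP.lazify.pow t).monotone (Set.indicator_le_self' (s := {y}) (f := (1 : α → ℝ))
    fun _ _ => zero_le_one) x
  rwa [(hP.lazify.pow t).map_one] at h

theorem lazify_pow_indicator_apply (P : Module.End ℝ (α → ℝ)) (t : ℕ) (S : Finset α)
    (f : α → ℝ) (x : α) :
    (lazify P ^ t) ((S : Set α).indicator f) x = ∑ y ∈ S, f y * heatKernel P t x y := by
  have h : (S : Set α).indicator f = ∑ y ∈ S, f y • ({y} : Set α).indicator 1 := by
    ext z
    simp [Set.indicator_apply, Pi.single_apply]
  simp [h, heatKernel]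

/-- The expected number of visits to `y` before time `t` of the lazy chain started from `x`. -/
def greenUpTo (P : Module.End ℝ (α → ℝ)) (t : ℕ) (x y : α) : ℝ :=
  ∑ s ∈ Finset.range t, heatKernel P s x y

theorem sum_lazify_pow_indicator_apply (P : Module.End ℝ (α → ℝ)) (t : ℕ) (S : Finset α)
    (f : α → ℝ) (x : α) :
    (∑ s ∈ Finset.range t, (lazify P ^ s) ((S : Set α).indicator f)) x =
      ∑ y ∈ S, f y * greenUpTo P t x y := by
  simp_rw [Finset.sum_apply, lazify_pow_indicator_apply, greenUpTo, Finset.mul_sum]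
  exact Finset.sum_comm

end MarkovOperator

/-! ### Staying, escaping and transience -/

section Staying

variable {α : Type*} {P : Module.End ℝ (α → ℝ)}

/-- `stayProb P B m x` is the probability that the chain started from `x` stays in `B` during
the time interval `[0, m]`. -/
def stayProb (P : Module.End ℝ (α → ℝ)) (B : Set α) : ℕ → α → ℝ
  | 0 => B.indicator 1
  | m + 1 => B.indicator (P (stayProb P B m))

theorem stayProb_nonneg (hP : IsMarkovOperator P) (B : Set α) (m : ℕ) :
    0 ≤ stayProb P B m := by
  induction m with
  | zero => exact Set.indicator_nonneg fun _ _ => zero_le_one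
  | succ m ih => exact Set.indicator_nonneg fun x _ => hP.map_nonneg ih x

theorem stayProb_of_notMem {B : Set α} {x : α} (hx : x ∉ B) (m : ℕ) : stayProb P B m x = 0 := by
  cases m <;> exact Set.indicator_of_notMem hx _

theorem stayProb_le_one (hP : IsMarkovOperator P) (B : Set α) (m : ℕ) : stayProb P B m ≤ 1 := by
  induction m with
  | zero => exact Set.indicator_le_self' fun _ _ => zero_le_one
  | succ m ih =>
    refine Set.indicator_le' (fun x _ => ?_) fun _ _ => zero_le_one
    simpa only [hP.map_one] using hP.monotone ih x

theorem antitone_stayProb (hP : IsMarkovOperator P) (B : Set α) : Antitone (stayProb P B) := by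
  refine antitone_nat_of_succ_le fun m => ?_
  induction m with
  | zero =>
    refine Set.indicator_mono fun x => ?_
    simpa only [hP.map_one] using hP.monotone (stayProb_le_one hP B 0) x
  | succ m ih => exact Set.indicator_mono (hP.monotone ih)

/-- The probability that the chain started from `x` stays in `B` forever. -/
def stayForeverProb (P : Module.End ℝ (α → ℝ)) (B : Set α) : α → ℝ := ⨅ m, stayProb P B m

theorem tendsto_stayProb (hP : IsMarkovOperator P) (B : Set α) :
    Tendsto (stayProb P B) atTop (nhds (stayForeverProb P B)) :=
  tendsto_atTop_ciInf (antitone_stayProb hP B) ⟨0, by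
    rintro _ ⟨m, rfl⟩
    exact stayProb_nonneg hP B m⟩

/-- The probability that the chain started from `x` stays in `B` at all times `n ≥ 1`. -/
def escapeProb (P : Module.End ℝ (α → ℝ)) (B : Set α) : α → ℝ := P (stayForeverProb P B)

theorem tendsto_map_stayProb (hP : IsMarkovOperator P) (B : Set α) :
    Tendsto (fun m => P (stayProb P B m)) atTop (nhds (escapeProb P B)) :=
  (hP.continuous.tendsto _).comp (tendsto_stayProb hP B)

theorem stayForeverProb_nonneg (hP : IsMarkovOperator P) (B : Set α) :
    0 ≤ stayForeverProb P B :=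
  ge_of_tendsto' (tendsto_stayProb hP B) (stayProb_nonneg hP B)

theorem stayForeverProb_le_one (hP : IsMarkovOperator P) (B : Set α) :
    stayForeverProb P B ≤ 1 :=
  le_of_tendsto' (tendsto_stayProb hP B) (stayProb_le_one hP B)

theorem escapeProb_nonneg (hP : IsMarkovOperator P) (B : Set α) : 0 ≤ escapeProb P B :=
  hP.map_nonneg (stayForeverProb_nonneg hP B)

theorem stayForeverProb_eq_indicator (hP : IsMarkovOperator P) (B : Set α) :
    stayForeverProb P B = B.indicator (escapeProb P B) := by
  refine tendsto_nhds_unique ((tendsto_add_atTop_iff_nat 1).2 (tendsto_stayProb hP B)) ?_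
  refine tendsto_pi_nhds.2 fun x => ?_
  by_cases hx : x ∈ B
  · simpa [stayProb, hx] using tendsto_pi_nhds.1 (tendsto_map_stayProb hP B) x
  · simp [stayProb, hx]

/-- The probability that the chain started from `x` ever visits `W`. -/
def hitProb (P : Module.End ℝ (α → ℝ)) (W : Set α) : α → ℝ := 1 - stayForeverProb P Wᶜ

theorem hitProb_nonneg (hP : IsMarkovOperator P) (W : Set α) : 0 ≤ hitProb P W :=
  sub_nonneg.2 (stayForeverProb_le_one hP Wᶜ)

theorem hitProb_of_mem (hP : IsMarkovOperator P) {W : Set α} {x : α} (hx : x ∈ W) :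
    hitProb P W x = 1 := by
  simp [hitProb, stayForeverProb_eq_indicator hP, hx]

theorem hitProb_sub_map_hitProb (hP : IsMarkovOperator P) (W : Set α) :
    hitProb P W - P (hitProb P W) = W.indicator (escapeProb P Wᶜ) := by
  rw [hitProb, map_sub, hP.map_one, ← escapeProb, sub_sub_sub_cancel_left,
    stayForeverProb_eq_indicator hP, sub_eq_iff_eq_add', Set.indicator_compl_add_self]

theorem sum_escapeProb_mul_greenUpTo (hP : IsMarkovOperator P) (W : Finset α) (t : ℕ)
    (x : α) : ∑ y ∈ W, escapeProb P (W : Set α)ᶜ y * greenUpTo P t x y =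
      2 * (hitProb P W x - (lazify P ^ t) (hitProb P W) x) := by
  rw [← sum_lazify_pow_indicator_apply, ← hitProb_sub_map_hitProb hP, sum_lazify_pow_sub_map]
  rfl

theorem sum_escapeProb_mul_le_two_mul_card (hP : IsMarkovOperator P) (W S : Finset α) {t : ℕ}
    {g : ℝ} (hg : ∀ y ∈ W, g ≤ ∑ x ∈ S, greenUpTo P t x y) :
    (∑ y ∈ W, escapeProb P (W : Set α)ᶜ y) * g ≤ 2 * S.card := by
  calc (∑ y ∈ W, escapeProb P (W : Set α)ᶜ y) * g
      ≤ ∑ y ∈ W, escapeProb P (W : Set α)ᶜ y * ∑ x ∈ S, greenUpTo P t x y := by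
        rw [Finset.sum_mul]
        gcongr with y hy
        exacts [escapeProb_nonneg hP _ y, hg y hy]
    _ = ∑ x ∈ S, ∑ y ∈ W, escapeProb P (W : Set α)ᶜ y * greenUpTo P t x y := by
        simp only [Finset.mul_sum]
        exact Finset.sum_comm
    _ ≤ ∑ _x ∈ S, (2 : ℝ) := by
        refine Finset.sum_le_sum fun x _ => ?_
        rw [sum_escapeProb_mul_greenUpTo hP]
        have h1 : hitProb P W x ≤ 1 := sub_le_self 1 (stayForeverProb_nonneg hP _ x)
        have h2 : 0 ≤ (lazify P ^ t) (hitProb P W) x :=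
          (hP.lazify.pow t).map_nonneg (hitProb_nonneg hP _) x
        linarith
    _ = 2 * S.card := by simp [mul_comm]

end Staying

section Transience

variable {α : Type*} {P : Module.End ℝ (α → ℝ)}

theorem summable_lazify_pow_indicator (W : Finset α)
    (hs : ∀ x y, Summable fun s => heatKernel P s x y) :
    Summable fun s => (lazify P ^ s) ((W : Set α).indicator 1) := by
  refine Pi.summable.2 fun x => ?_
  simp_rw [lazify_pow_indicator_apply]
  exact summable_sum fun y _ => (hs x y).mul_left _

/-- The expected time the lazy chain spends in `W`. -/
def potential (P : Module.End ℝ (α → ℝ)) (W : Set α) : α → ℝ :=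
  ∑' s, (lazify P ^ s) (W.indicator 1)

theorem lazify_pow_potential (hP : IsMarkovOperator P) {W : Set α}
    (hs : Summable fun s => (lazify P ^ s) (W.indicator 1)) (t : ℕ) :
    (lazify P ^ t) (potential P W) = ∑' s, (lazify P ^ (s + t)) (W.indicator 1) := by
  rw [potential, ((hs.hasSum.map (lazify P ^ t) (hP.lazify.pow t).continuous).tsum_eq).symm]
  exact tsum_congr fun s => by rw [add_comm, pow_add]; rfl

theorem tendsto_lazify_pow_potential (hP : IsMarkovOperator P) {W : Set α}
    (hs : Summable fun s => (lazify P ^ s) (W.indicator 1)) :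
    Tendsto (fun t => (lazify P ^ t) (potential P W)) atTop (nhds 0) := by
  simp_rw [lazify_pow_potential hP hs]
  exact tendsto_sum_nat_add fun s => (lazify P ^ s) (W.indicator 1)

theorem indicator_le_potential (hP : IsMarkovOperator P) {W : Set α}
    (hs : Summable fun s => (lazify P ^ s) (W.indicator 1)) : W.indicator 1 ≤ potential P W :=
  hs.le_tsum 0 fun s _ => (hP.lazify.pow s).map_nonneg (Set.indicator_nonneg fun _ _ => zero_le_one)

theorem map_potential (hP : IsMarkovOperator P) {W : Set α}
    (hs : Summable fun s => (lazify P ^ s) (W.indicator 1)) :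
    P (potential P W) = potential P W - (2 : ℝ) • W.indicator 1 := by
  have h1 : lazify P (potential P W) = potential P W - W.indicator 1 := by
    have h := lazify_pow_potential hP hs 1
    rw [pow_one] at h
    rw [h, potential, hs.tsum_eq_zero_add]
    simp
  rw [lazify_apply] at h1
  have h2 : potential P W + P (potential P W) = (2 : ℝ) • (potential P W - W.indicator 1) := by
    rw [← h1, smul_inv_smul₀ two_ne_zero]
  rw [← eq_sub_iff_add_eq'] at h2
  rw [h2]
  module

theorem one_sub_stayProb_le_potential (hP : IsMarkovOperator P) {W : Set α}
    (hs : Summable fun s => (lazify P ^ s) (W.indicator 1)) (m : ℕ) :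
    1 - stayProb P Wᶜ m ≤ potential P W := by
  have hW := indicator_le_potential hP hs
  have : 0 ≤ potential P W := le_trans (Set.indicator_nonneg fun _ _ => zero_le_one) hW
  induction m with
  | zero =>
    have h : (1 : α → ℝ) - Wᶜ.indicator 1 = W.indicator 1 :=
      sub_eq_of_eq_add (Set.indicator_self_add_compl W 1).symm
    rwa [stayProb, h]
  | succ m ih =>
    intro x
    by_cases hx : x ∈ W
    · simpa [stayProb, hx] using hW x
    · have h := hP.monotone ih x
      rw [map_sub, hP.map_one, map_potential hP hs] at h
      simpa [stayProb, hx] using h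

theorem hitProb_le_potential (hP : IsMarkovOperator P) {W : Set α}
    (hs : Summable fun s => (lazify P ^ s) (W.indicator 1)) : hitProb P W ≤ potential P W :=
  le_of_tendsto' (tendsto_const_nhds.sub (tendsto_stayProb hP Wᶜ))
    (one_sub_stayProb_le_potential hP hs)

theorem tendsto_lazify_pow_hitProb (hP : IsMarkovOperator P) {W : Set α}
    (hs : Summable fun s => (lazify P ^ s) (W.indicator 1)) :
    Tendsto (fun t => (lazify P ^ t) (hitProb P W)) atTop (nhds 0) :=
  tendsto_pi_nhds.2 fun x => squeeze_zero
    (fun t => (hP.lazify.pow t).map_nonneg (hitProb_nonneg hP W) x)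
    (fun t => (hP.lazify.pow t).monotone (hitProb_le_potential hP hs) x)
    (tendsto_pi_nhds.1 (tendsto_lazify_pow_potential hP hs) x)

/-- The last-exit decomposition: the walk started in `W` leaves `W` for good exactly once. The
lazy walk makes on average two attempts at every departure, whence the factor `2`. -/
theorem tendsto_sum_escapeProb_mul_greenUpTo (hP : IsMarkovOperator P) (W : Finset α)
    (hs : ∀ x y, Summable fun s => heatKernel P s x y) {x : α} (hx : x ∈ W) :
    Tendsto (fun t => ∑ y ∈ W, escapeProb P (W : Set α)ᶜ y * greenUpTo P t x y) atTop
      (nhds 2) := by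
  have h := tendsto_pi_nhds.1
    (tendsto_lazify_pow_hitProb hP (summable_lazify_pow_indicator W hs)) x
  simp_rw [sum_escapeProb_mul_greenUpTo hP, hitProb_of_mem hP (Finset.mem_coe.2 hx)]
  simpa using (h.const_sub 1).const_mul 2

theorem abs_sum_escapeProb_mul_greenUpTo_sub_two_le (hP : IsMarkovOperator P) (W : Finset α)
    (hs : ∀ x y, Summable fun s => heatKernel P s x y) {x : α} (hx : x ∈ W) {t : ℕ} {T : ℝ}
    (hT : ∀ y, ∑' s, heatKernel P (s + t) x y ≤ T) :
    |∑ y ∈ W, escapeProb P (W : Set α)ᶜ y * greenUpTo P t x y - 2| ≤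
      (∑ y ∈ W, escapeProb P (W : Set α)ᶜ y) * T := by
  have h2 : ∑ y ∈ W, escapeProb P (W : Set α)ᶜ y * ∑' s, heatKernel P s x y = 2 :=
    tendsto_nhds_unique
      (tendsto_finsetSum _ fun y _ => ((hs x y).hasSum.tendsto_sum_nat.const_mul _))
      (tendsto_sum_escapeProb_mul_greenUpTo hP W hs hx)
  have htail (y : α) : ∑' s, heatKernel P s x y - greenUpTo P t x y =
      ∑' s, heatKernel P (s + t) x y :=
    sub_eq_of_eq_add' ((hs x y).sum_add_tsum_nat_add t).symm
  rw [abs_sub_comm, ← h2, ← Finset.sum_sub_distrib]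
  simp only [← mul_sub, htail]
  rw [abs_of_nonneg, Finset.sum_mul]
  · gcongr with y
    exacts [escapeProb_nonneg hP _ y, hT y]
  · exact Finset.sum_nonneg fun y _ => mul_nonneg (escapeProb_nonneg hP _ y)
      (tsum_nonneg fun s => heatKernel_nonneg hP _ x y)

end Transience

/-! ### Mean exit times and Kac's formula -/

section MeanExit

variable {α : Type*} {P : Module.End ℝ (α → ℝ)} {B : Set α}

/-- The expected number of steps the chain started from `x` needs to leave `B`. -/
def meanExit (P : Module.End ℝ (α → ℝ)) (B : Set α) (x : α) : ℝ := ∑' m, stayProb P B m x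

/-- For `y` outside `B` and `V = Bᶜ`, this is the expected return time to `V` from `y`. -/
def meanReturn (P : Module.End ℝ (α → ℝ)) (B : Set α) (y : α) : ℝ := 1 + P (meanExit P B) y

theorem meanExit_nonneg (hP : IsMarkovOperator P) (B : Set α) : 0 ≤ meanExit P B :=
  fun x => tsum_nonneg fun m => stayProb_nonneg hP B m x

theorem meanExit_of_notMem {x : α} (hx : x ∉ B) : meanExit P B x = 0 := by
  simp [meanExit, stayProb_of_notMem hx]

theorem meanReturn_nonneg (hP : IsMarkovOperator P) (B : Set α) (y : α) : 0 ≤ meanReturn P B y :=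
  add_nonneg zero_le_one (hP.map_nonneg (meanExit_nonneg hP B) y)

theorem sum_range_succ_stayProb (P : Module.End ℝ (α → ℝ)) (B : Set α) (M : ℕ) :
    ∑ m ∈ Finset.range (M + 1), stayProb P B m =
      B.indicator (1 + P (∑ m ∈ Finset.range M, stayProb P B m)) := by
  simp_rw [Finset.sum_range_succ', stayProb, map_sum, Set.indicator_add', add_comm]
  rw [Finset.indicator_sum]

theorem sum_stayProb_le (hP : IsMarkovOperator P) {w : α → ℝ} (hw : 0 ≤ w)
    (hPw : ∀ x ∈ B, 1 + P w x ≤ w x) (M : ℕ) :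
    ∑ m ∈ Finset.range M, stayProb P B m ≤ w := by
  induction M with
  | zero => simpa using hw
  | succ M ih =>
    rw [sum_range_succ_stayProb]
    exact Set.indicator_le' (fun x hx => (add_le_add_right (hP.monotone ih x) 1).trans (hPw x hx))
      fun x _ => hw x

/-- If from every point the lazy chain is at `z ∉ B` after `t` steps with probability at least
`c`, then `(t - greenUpTo P t · z) / (2 c)` dominates the mean exit time. -/
theorem summable_stayProb_of_le_heatKernel (hP : IsMarkovOperator P) {z : α} (hz : z ∉ B) {t : ℕ}
    {c : ℝ} (hc : 0 < c) (h : ∀ x, c ≤ heatKernel P t x z) (x : α) :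
    Summable fun m => stayProb P B m x := by
  set g : α → ℝ := ∑ s ∈ Finset.range t, (lazify P ^ s) (({z} : Set α).indicator 1) with hg
  set w : α → ℝ := (2 * c)⁻¹ • ((t : ℝ) • (1 : α → ℝ) - g) with hw
  have hgt : g ≤ (t : ℝ) • (1 : α → ℝ) := fun y => by
    simpa [hg, heatKernel] using
      Finset.sum_le_sum fun s (_ : s ∈ Finset.range t) => heatKernel_le_one hP s y z
  have hw0 : 0 ≤ w := smul_nonneg (by positivity) (sub_nonneg.2 hgt)
  have hPw : ∀ y ∈ B, 1 + P w y ≤ w y := fun y hy => by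
    have hyz : y ≠ z := fun h => hz (h ▸ hy)
    have h1 := congrFun (sub_map_sum_lazify_pow P t (({z} : Set α).indicator 1)) y
    have h2 : w y - P w y = (2 * c)⁻¹ * (2 * heatKernel P t y z) := by
      simp only [← hg, Pi.sub_apply, Pi.smul_apply, smul_eq_mul,
        Set.indicator_of_notMem (Set.notMem_singleton_iff.2 hyz)] at h1
      change _ = 2 * (0 - heatKernel P t y z) at h1
      simp only [hw, map_smul, map_sub, hP.map_one, Pi.sub_apply, Pi.smul_apply, smul_eq_mul]
      linear_combination -(2 * c)⁻¹ * h1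
    have h3 : 1 ≤ (2 * c)⁻¹ * (2 * heatKernel P t y z) := by
      rw [inv_mul_eq_div, one_le_div (by positivity)]
      linarith [h y]
    linarith
  refine summable_of_sum_range_le (fun m => stayProb_nonneg hP B m x) (c := w x) fun M => ?_
  simpa using sum_stayProb_le hP hw0 hPw M x

theorem tendsto_sum_stayProb (hs : ∀ x, Summable fun m => stayProb P B m x) :
    Tendsto (fun M => ∑ m ∈ Finset.range M, stayProb P B m) atTop (nhds (meanExit P B)) :=
  tendsto_pi_nhds.2 fun x => by
    simpa [meanExit] using (hs x).hasSum.tendsto_sum_nat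

theorem meanExit_eq_indicator (hP : IsMarkovOperator P)
    (hs : ∀ x, Summable fun m => stayProb P B m x) :
    meanExit P B = B.indicator (meanReturn P B) := by
  have h := tendsto_sum_stayProb hs
  refine tendsto_nhds_unique ((tendsto_add_atTop_iff_nat 1).2 h) (tendsto_pi_nhds.2 fun x => ?_)
  simp_rw [sum_range_succ_stayProb]
  by_cases hx : x ∈ B
  · simpa [hx, meanReturn] using
      (tendsto_pi_nhds.1 ((hP.continuous.tendsto _).comp h) x).const_add 1
  · simp [hx]

theorem meanExit_sub_map_meanExit (hP : IsMarkovOperator P)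
    (hs : ∀ x, Summable fun m => stayProb P B m x) :
    meanExit P B - P (meanExit P B) = 1 - Bᶜ.indicator (meanReturn P B) := by
  have h : meanReturn P B = 1 + P (meanExit P B) := rfl
  rw [sub_eq_sub_iff_add_eq_add, ← h]
  nth_rw 1 [meanExit_eq_indicator hP hs]
  exact Set.indicator_self_add_compl B _

/-- **Kac's formula**. -/
theorem sum_meanReturn_eq_card [Fintype α] (hP : IsMarkovOperator P)
    (hsum : ∀ f, ∑ x, P f x = ∑ x, f x) {V : Finset α}
    (hs : ∀ x, Summable fun m => stayProb P (V : Set α)ᶜ m x) :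
    ∑ y ∈ V, meanReturn P (V : Set α)ᶜ y = Fintype.card α := by
  have h := congrArg (fun f : α → ℝ => ∑ x, f x) (meanExit_sub_map_meanExit hP hs)
  simp only [compl_compl, Pi.sub_apply, Finset.sum_sub_distrib, hsum, sub_self, Pi.one_apply,
    Finset.sum_const, Finset.card_univ, nsmul_one] at h
  rw [eq_comm, sub_eq_zero] at h
  rw [h, Finset.sum_indicator_subset _ (Finset.subset_univ V)]

theorem lazify_pow_meanExit_apply (hP : IsMarkovOperator P) {V : Finset α}
    (hs : ∀ x, Summable fun m => stayProb P (V : Set α)ᶜ m x) (t : ℕ) {x : α} (hx : x ∈ V) :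
    2 * (lazify P ^ t) (meanExit P (V : Set α)ᶜ) x =
      ∑ y ∈ V, meanReturn P (V : Set α)ᶜ y * greenUpTo P t x y - t := by
  have h := congrFun (sum_lazify_pow_sub_map P t (meanExit P (V : Set α)ᶜ)) x
  rw [meanExit_sub_map_meanExit hP hs, compl_compl] at h
  simp only [map_sub, Finset.sum_sub_distrib, Pi.sub_apply, sum_lazify_pow_indicator_apply,
    Pi.smul_apply, smul_eq_mul, meanExit_of_notMem (Set.notMem_compl_iff.2 (Finset.mem_coe.2 hx)),
    fun s => (hP.lazify.pow s).map_one, Finset.sum_const, Finset.card_range, nsmul_eq_mul,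
    mul_one, Pi.natCast_apply] at h
  linarith

end MeanExit

section Mixing

variable {α : Type*} [Fintype α] {P : Module.End ℝ (α → ℝ)}

/-- The mean exit time from `B` of the chain started from the uniform distribution. -/
def unifMeanExit (P : Module.End ℝ (α → ℝ)) (B : Set α) : ℝ :=
  (Fintype.card α : ℝ)⁻¹ * ∑ x, meanExit P B x

theorem unifMeanExit_nonneg (hP : IsMarkovOperator P) (B : Set α) : 0 ≤ unifMeanExit P B :=
  mul_nonneg (by positivity) (Finset.sum_nonneg fun x _ => meanExit_nonneg hP B x)

theorem abs_lazify_pow_apply_sub_le {t : ℕ} {E : ℝ}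
    (hE : ∀ x y, |heatKernel P t x y - (Fintype.card α : ℝ)⁻¹| ≤ E) {f : α → ℝ} (hf : 0 ≤ f)
    (x : α) : |(lazify P ^ t) f x - (Fintype.card α : ℝ)⁻¹ * ∑ y, f y| ≤ E * ∑ y, f y := by
  have h : (lazify P ^ t) f x = ∑ y, f y * heatKernel P t x y := by
    simpa using lazify_pow_indicator_apply P t Finset.univ f x
  rw [h, mul_comm, Finset.sum_mul, ← Finset.sum_sub_distrib, mul_comm E, Finset.sum_mul]
  refine (Finset.abs_sum_le_sum_abs _ _).trans (Finset.sum_le_sum fun y _ => ?_)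
  rw [← mul_sub, abs_mul, abs_of_nonneg (hf y)]
  exact mul_le_mul_of_nonneg_left (hE x y) (hf y)

/-- Weights `e` on `V` that balance the Green function up to time `t` determine the mean hitting
time of `V`, once `t` exceeds the mixing time. -/
theorem abs_unifMeanExit_mul_sum_sub_card_le (hP : IsMarkovOperator P)
    (hsum : ∀ f, ∑ x, P f x = ∑ x, f x) {V : Finset α}
    (hs : ∀ x, Summable fun m => stayProb P (V : Set α)ᶜ m x) {t : ℕ} {E : ℝ}
    (hE : ∀ x y, |heatKernel P t x y - (Fintype.card α : ℝ)⁻¹| ≤ E) {e : α → ℝ}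
    (he : ∀ x ∈ V, 0 ≤ e x) {κ : ℝ}
    (hκ : ∀ y ∈ V, |∑ x ∈ V, e x * greenUpTo P t x y - 2| ≤ κ) :
    |unifMeanExit P (V : Set α)ᶜ * ∑ x ∈ V, e x - Fintype.card α| ≤
      (∑ x ∈ V, e x) * (E * ∑ x, meanExit P (V : Set α)ᶜ x) +
        (Fintype.card α * κ + t * ∑ x ∈ V, e x) / 2 := by
  set u := meanExit P (V : Set α)ᶜ
  set r := meanReturn P (V : Set α)ᶜ
  have hmix : |unifMeanExit P (V : Set α)ᶜ * ∑ x ∈ V, e x - ∑ x ∈ V, e x * (lazify P ^ t) u x| ≤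
      (∑ x ∈ V, e x) * (E * ∑ x, u x) := by
    rw [mul_comm, Finset.sum_mul, Finset.sum_mul, ← Finset.sum_sub_distrib]
    refine (Finset.abs_sum_le_sum_abs _ _).trans (Finset.sum_le_sum fun x hx => ?_)
    rw [← mul_sub, abs_mul, abs_of_nonneg (he x hx), abs_sub_comm]
    exact mul_le_mul_of_nonneg_left
      (abs_lazify_pow_apply_sub_le hE (meanExit_nonneg hP _) x) (he x hx)
  have hbal : 2 * ∑ x ∈ V, e x * (lazify P ^ t) u x =
      ∑ y ∈ V, r y * ∑ x ∈ V, e x * greenUpTo P t x y - t * ∑ x ∈ V, e x := by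
    simp_rw [Finset.mul_sum]
    rw [Finset.sum_comm, ← Finset.sum_sub_distrib]
    refine Finset.sum_congr rfl fun x hx => ?_
    rw [mul_left_comm, lazify_pow_meanExit_apply hP hs t hx, mul_sub, Finset.mul_sum,
      mul_comm _ (e x)]
    simp_rw [mul_left_comm (e x)]
    rfl
  have hKac : |∑ y ∈ V, r y * ∑ x ∈ V, e x * greenUpTo P t x y - 2 * Fintype.card α| ≤
      Fintype.card α * κ := by
    rw [← sum_meanReturn_eq_card hP hsum hs, mul_comm 2, Finset.sum_mul, Finset.sum_mul,
      ← Finset.sum_sub_distrib]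
    refine (Finset.abs_sum_le_sum_abs _ _).trans (Finset.sum_le_sum fun y hy => ?_)
    rw [← mul_sub, abs_mul, abs_of_nonneg (meanReturn_nonneg hP _ y)]
    exact mul_le_mul_of_nonneg_left (hκ y hy) (meanReturn_nonneg hP _ y)
  have ht : 0 ≤ t * ∑ x ∈ V, e x := mul_nonneg t.cast_nonneg (Finset.sum_nonneg he)
  rw [abs_le] at hmix hKac ⊢
  constructor <;> linarith [hmix.1, hmix.2, hKac.1, hKac.2]

end Mixing

/-! ### The simple random walk -/

section Intertwining

variable {α β : Type*} {P : Module.End ℝ (α → ℝ)} {P' : Module.End ℝ (β → ℝ)} {e : α → β}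

theorem lazify_pow_comp (h : ∀ f, P (f ∘ e) = P' f ∘ e) (t : ℕ) (f : β → ℝ) :
    (lazify P ^ t) (f ∘ e) = (lazify P' ^ t) f ∘ e :=
  (map_lazify_pow (L := LinearMap.funLeft ℝ ℝ e) (fun f => (h f).symm) t f).symm

theorem heatKernel_map (he : Function.Injective e) (h : ∀ f, P (f ∘ e) = P' f ∘ e) (t : ℕ)
    (x y : α) : heatKernel P' t (e x) (e y) = heatKernel P t x y := by
  have hy : ({y} : Set α).indicator 1 = ({e y} : Set β).indicator (1 : β → ℝ) ∘ e := by
    ext z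
    simp only [Function.comp_apply, Set.indicator_apply, Set.mem_singleton_iff, he.eq_iff,
      Pi.one_apply]
  rw [heatKernel, heatKernel, hy, lazify_pow_comp h, Function.comp_apply]

end Intertwining

section SimpleRandomWalk

variable {d : ℕ} {R S : Type*} [AddCommGroupWithOne R] [AddCommGroupWithOne S]

/-- The transition operator of the simple random walk on `Fin d → R`, which averages a function
over the `2 d` neighbours of a point. -/
def srw (d : ℕ) (R : Type*) [AddCommGroupWithOne R] : Module.End ℝ ((Fin d → R) → ℝ) where
  toFun f x := (2 * d : ℝ)⁻¹ * ∑ i, (f (x + Pi.single i 1) + f (x - Pi.single i 1))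
  map_add' f g := by
    ext x
    simp only [Pi.add_apply, ← mul_add, ← Finset.sum_add_distrib, add_add_add_comm]
  map_smul' c f := by
    ext x
    simp only [Pi.smul_apply, smul_eq_mul, RingHom.id_apply, ← mul_add, ← Finset.mul_sum,
      mul_left_comm]

theorem srw_apply (f : (Fin d → R) → ℝ) (x : Fin d → R) :
    srw d R f x = (2 * d : ℝ)⁻¹ * ∑ i, (f (x + Pi.single i 1) + f (x - Pi.single i 1)) := rfl

theorem isMarkovOperator_srw (hd : d ≠ 0) : IsMarkovOperator (srw d R) where
  monotone f g h x := by
    simp only [srw_apply]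
    gcongr <;> apply h
  map_one := by
    have : (d : ℝ) ≠ 0 := Nat.cast_ne_zero.2 hd
    ext x
    simp only [srw_apply, Pi.one_apply, Finset.sum_const, Finset.card_univ, Fintype.card_fin,
      nsmul_eq_mul]
    field_simp
    norm_num
  continuous := continuous_pi fun x => by
    simp only [srw_apply]
    fun_prop

theorem srw_comp_sub (a : Fin d → R) (f : (Fin d → R) → ℝ) :
    srw d R (f ∘ fun z => z - a) = srw d R f ∘ fun z => z - a := by
  ext x
  simp only [srw_apply, Function.comp_apply, add_sub_right_comm, sub_right_comm]

theorem srw_comp_neg (f : (Fin d → R) → ℝ) :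
    srw d R (f ∘ fun z => -z) = srw d R f ∘ fun z => -z := by
  ext x
  simp only [srw_apply, Function.comp_apply, neg_add', neg_sub', sub_neg_eq_add, add_comm]

theorem srw_comp_map {φ : R →+ S} (hφ : φ 1 = 1) (f : (Fin d → S) → ℝ) :
    srw d R (f ∘ fun z => φ ∘ z) = srw d S f ∘ fun z => φ ∘ z := by
  have h (i : Fin d) : φ ∘ Pi.single i 1 = Pi.single i 1 := by
    ext j
    simp only [Function.comp_apply, Pi.single_apply, apply_ite φ, hφ, map_zero]
  have hadd (x y : Fin d → R) : φ ∘ (x + y) = φ ∘ x + φ ∘ y := funext fun _ => map_add φ _ _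
  have hsub (x y : Fin d → R) : φ ∘ (x - y) = φ ∘ x - φ ∘ y := funext fun _ => map_sub φ _ _
  ext x
  simp only [srw_apply, Function.comp_apply, hadd, hsub, h]

theorem heatKernel_srw_sub_zero (t : ℕ) (x y : Fin d → R) :
    heatKernel (srw d R) t (x - y) 0 = heatKernel (srw d R) t x y := by
  simpa using heatKernel_map (sub_left_injective (b := y)) (srw_comp_sub y) t x y

theorem heatKernel_srw_comm (t : ℕ) (x y : Fin d → R) :
    heatKernel (srw d R) t x y = heatKernel (srw d R) t y x := by
  have h := heatKernel_map neg_injective srw_comp_neg t (x - y) 0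
  rwa [neg_sub, neg_zero, heatKernel_srw_sub_zero, heatKernel_srw_sub_zero, eq_comm] at h

theorem sum_srw [Fintype R] (hd : d ≠ 0) (f : (Fin d → R) → ℝ) :
    ∑ x, srw d R f x = ∑ x, f x := by
  have : (d : ℝ) ≠ 0 := Nat.cast_ne_zero.2 hd
  have h (i : Fin d) :
      ∑ x : Fin d → R, (f (x + Pi.single i 1) + f (x - Pi.single i 1)) = 2 * ∑ x, f x := by
    rw [Finset.sum_add_distrib, two_mul]
    exact congr_arg₂ _ (Fintype.sum_equiv (Equiv.addRight (Pi.single i 1)) _ f fun _ => rfl)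
      (Fintype.sum_equiv (Equiv.subRight (Pi.single i 1)) _ f fun _ => rfl)
  simp only [srw_apply, ← Finset.mul_sum]
  rw [Finset.sum_comm]
  simp only [h, Finset.sum_const, Finset.card_univ, Fintype.card_fin, nsmul_eq_mul]
  field_simp

end SimpleRandomWalk

/-! ### Fourier analysis on the torus -/

section GaussianSums

variable {N : ℕ} [NeZero N]

theorem sum_exp_neg_mul_le {a : ℝ} (ha : 0 < a) (n : ℕ) :
    ∑ k ∈ Finset.range n, Real.exp (-(a * k)) ≤ 1 + 1 / a := by
  have h1 : Real.exp (-a) ≤ (a + 1)⁻¹ := by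
    rw [Real.exp_neg]
    exact inv_anti₀ (by positivity) (Real.add_one_le_exp a)
  have hlt : Real.exp (-a) < 1 := Real.exp_lt_one_iff.2 (neg_lt_zero.2 ha)
  calc ∑ k ∈ Finset.range n, Real.exp (-(a * k))
      = ∑ k ∈ Finset.range n, Real.exp (-a) ^ k := by
        simp only [← Real.exp_nat_mul, mul_neg, mul_comm a]
    _ ≤ (1 - Real.exp (-a))⁻¹ := by
        rw [← tsum_geometric_of_lt_one (Real.exp_pos _).le hlt]
        exact (summable_geometric_of_lt_one (Real.exp_pos _).le hlt).sum_le_tsum _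
          fun _ _ => by positivity
    _ ≤ (1 - (a + 1)⁻¹)⁻¹ := by
        refine inv_anti₀ (sub_pos.2 (inv_lt_one_of_one_lt₀ ?_)) ?_ <;> linarith
    _ = 1 + 1 / a := by
        have h2 : 1 - (a + 1)⁻¹ = a / (a + 1) := by field_simp; ring
        rw [h2, inv_div]
        field_simp

theorem sum_natAbs_valMinAbs_le {g : ℕ → ℝ} (hg : Antitone g) (h0 : ∀ k, 0 ≤ g k) :
    ∑ j : ZMod N, g j.valMinAbs.natAbs ≤ 2 * ∑ k ∈ Finset.range N, g k := by
  have hsum (f : ℕ → ℝ) : ∑ j : ZMod N, f j.val = ∑ k ∈ Finset.range N, f k := by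
    obtain ⟨n, rfl⟩ := Nat.exists_eq_succ_of_ne_zero (NeZero.ne N)
    exact Fin.sum_univ_eq_sum_range f (n + 1)
  have hterm (j : ZMod N) : g j.valMinAbs.natAbs ≤ g j.val + g (N - 1 - j.val) := by
    rw [ZMod.valMinAbs_natAbs_eq_min]
    rcases min_choice j.val (N - j.val) with h | h <;> rw [h]
    · linarith [h0 (N - 1 - j.val)]
    · linarith [h0 j.val, hg (show N - 1 - j.val ≤ N - j.val by omega)]
  refine (Finset.sum_le_sum fun j _ => hterm j).trans_eq ?_
  rw [Finset.sum_add_distrib, hsum g, hsum fun k => g (N - 1 - k), Finset.sum_range_reflect,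
    two_mul]

theorem exp_neg_mul_sq_le {b : ℝ} (hb : 0 ≤ b) (x : ℝ) :
    Real.exp (-(b * x ^ 2)) ≤ Real.exp 1 * Real.exp (-(2 * √b * x)) := by
  rw [← Real.exp_add, Real.exp_le_exp]
  linear_combination sq_nonneg (1 - √b * x) + x ^ 2 * (Real.mul_self_sqrt hb).le

theorem sum_exp_neg_mul_valMinAbs_sq_le {b : ℝ} (hb : 0 < b) :
    ∑ j : ZMod N, Real.exp (-(b * (j.valMinAbs : ℝ) ^ 2)) ≤ 6 * (1 + 1 / √b) := by
  have hs : 0 < √b := Real.sqrt_pos.2 hb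
  have habs (j : ZMod N) : (j.valMinAbs : ℝ) ^ 2 = (j.valMinAbs.natAbs : ℝ) ^ 2 := by
    rw [Nat.cast_natAbs, Int.cast_abs, sq_abs]
  have hanti : Antitone fun k : ℕ => Real.exp (-(b * (k : ℝ) ^ 2)) := fun k l h => by
    dsimp only
    gcongr
  calc ∑ j : ZMod N, Real.exp (-(b * (j.valMinAbs : ℝ) ^ 2))
      ≤ 2 * ∑ k ∈ Finset.range N, Real.exp (-(b * (k : ℝ) ^ 2)) := by
        simp only [habs]
        exact sum_natAbs_valMinAbs_le hanti fun k => (Real.exp_pos _).le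
    _ ≤ 2 * (Real.exp 1 * (1 + 1 / (2 * √b))) := by
        gcongr
        refine (Finset.sum_le_sum fun (k : ℕ) _ => exp_neg_mul_sq_le hb.le k).trans ?_
        rw [← Finset.mul_sum]
        gcongr
        exact sum_exp_neg_mul_le (by positivity) N
    _ ≤ 2 * (3 * (1 + 1 / √b)) := by
        gcongr
        · exact Real.exp_one_lt_three.le
        · linarith
    _ = 6 * (1 + 1 / √b) := by ring

end GaussianSums

section TorusFourier

variable {d N : ℕ}

/-- The eigenvalue of the lazy simple random walk on the torus attached to a frequency `ξ`. -/
def torusEigenvalue (ξ : Torus d N) : ℝ :=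
  (1 + (d : ℝ)⁻¹ * ∑ i, Real.cos (2 * Real.pi * (ξ i).valMinAbs / N)) / 2

theorem torusEigenvalue_zero (hd : d ≠ 0) : torusEigenvalue (0 : Torus d N) = 1 := by
  simp [torusEigenvalue, hd]

theorem torusEigenvalue_nonneg (hd : d ≠ 0) (ξ : Torus d N) : 0 ≤ torusEigenvalue ξ := by
  have hd' : (0 : ℝ) < d := Nat.cast_pos.2 (Nat.pos_of_ne_zero hd)
  have h : -(d : ℝ) ≤ ∑ i, Real.cos (2 * Real.pi * (ξ i).valMinAbs / N) := by
    simpa using Finset.sum_le_sum fun i (_ : i ∈ Finset.univ) =>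
      Real.neg_one_le_cos (2 * Real.pi * (ξ i).valMinAbs / N)
  have : -1 ≤ (d : ℝ)⁻¹ * ∑ i, Real.cos (2 * Real.pi * (ξ i).valMinAbs / N) := by
    rw [inv_mul_eq_div, le_div_iff₀ hd']
    linarith
  unfold torusEigenvalue
  linarith

theorem one_le_sum_valMinAbs_sq {ξ : Torus d N} (hξ : ξ ≠ 0) :
    1 ≤ ∑ i, ((ξ i).valMinAbs : ℝ) ^ 2 := by
  obtain ⟨i, hi⟩ := Function.ne_iff.mp hξ
  have h : 1 ≤ (ξ i).valMinAbs ^ 2 :=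
    (one_le_sq_iff_one_le_abs _).2 (Int.one_le_abs (mt (ZMod.valMinAbs_eq_zero _).1 hi))
  have h' : (1 : ℝ) ≤ ((ξ i).valMinAbs : ℝ) ^ 2 := mod_cast h
  exact h'.trans (Finset.single_le_sum (f := fun i => ((ξ i).valMinAbs : ℝ) ^ 2)
    (fun i _ => sq_nonneg _) (Finset.mem_univ i))

variable [NeZero N]

/-- The real character `x ↦ cos (2π ξ·x / N)` of the discrete torus, an eigenfunction of the
simple random walk. -/
def torusChar (ξ x : Torus d N) : ℝ := (ZMod.stdAddChar (ξ ⬝ᵥ x)).re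

theorem torusChar_zero_left (x : Torus d N) : torusChar 0 x = 1 := by simp [torusChar]

theorem abs_torusChar_le_one (ξ x : Torus d N) : |torusChar ξ x| ≤ 1 :=
  (Complex.abs_re_le_norm _).trans_eq (AddChar.norm_apply _ _)

theorem stdAddChar_add_stdAddChar_neg (j : ZMod N) :
    (ZMod.stdAddChar j + ZMod.stdAddChar (-j) : ℂ) =
      (2 * Real.cos (2 * Real.pi * j.valMinAbs / N) : ℝ) := by
  have h : (ZMod.stdAddChar j : ℂ) = Complex.exp (2 * Real.pi * Complex.I * j.valMinAbs / N) := by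
    rw [← ZMod.stdAddChar_coe, ZMod.coe_valMinAbs]
  rw [AddChar.map_neg_eq_inv, h, ← Complex.exp_neg, Complex.ofReal_mul, Complex.ofReal_cos,
    Complex.ofReal_ofNat, Complex.two_cos]
  push_cast
  congr 2 <;> ring

theorem srw_torusChar (ξ : Torus d N) :
    srw d (ZMod N) (torusChar ξ) =
      ((d : ℝ)⁻¹ * ∑ i, Real.cos (2 * Real.pi * (ξ i).valMinAbs / N)) • torusChar ξ := by
  have h (x : Torus d N) (i : Fin d) :
      torusChar ξ (x + Pi.single i 1) + torusChar ξ (x - Pi.single i 1) =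
        2 * Real.cos (2 * Real.pi * (ξ i).valMinAbs / N) * torusChar ξ x := by
    rw [torusChar, torusChar, torusChar, dotProduct_add, dotProduct_sub, dotProduct_single,
      mul_one, sub_eq_add_neg, AddChar.map_add_eq_mul, AddChar.map_add_eq_mul, ← Complex.add_re,
      ← mul_add, stdAddChar_add_stdAddChar_neg, mul_comm, Complex.re_ofReal_mul]
  ext x
  simp only [srw_apply, h, Pi.smul_apply, smul_eq_mul, ← Finset.sum_mul, ← Finset.mul_sum, mul_inv]
  ring

theorem lazify_srw_pow_torusChar (t : ℕ) (ξ : Torus d N) :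
    (lazify (srw d (ZMod N)) ^ t) (torusChar ξ) = torusEigenvalue ξ ^ t • torusChar ξ :=
  lazify_pow_apply_of_map_eq_smul (srw_torusChar ξ) t

theorem sum_torusChar_apply (x : Torus d N) :
    ∑ ξ, torusChar ξ x = if x = 0 then (N : ℝ) ^ d else 0 := by
  have h : ∑ ξ : Torus d N, (ZMod.stdAddChar (ξ ⬝ᵥ x) : ℂ) =
      ∏ i, ∑ j : ZMod N, (ZMod.stdAddChar (j * x i) : ℂ) := by
    rw [Finset.prod_univ_sum, Fintype.piFinset_univ]
    exact Finset.sum_congr rfl fun ξ _ =>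
      map_sum (ZMod.stdAddChar (N := N)).toAddMonoidHom (fun i => ξ i * x i) Finset.univ
  simp only [torusChar, ← Complex.re_sum, h,
    AddChar.sum_mulShift _ (ZMod.isPrimitive_stdAddChar N), ZMod.card]
  split_ifs with hx
  · simp [hx, ← Complex.ofReal_natCast, ← Complex.ofReal_pow]
  · obtain ⟨i, hi⟩ := Function.ne_iff.mp hx
    rw [Finset.prod_eq_zero (Finset.mem_univ i) (by simp [show x i ≠ 0 from hi]),
      Complex.zero_re]

theorem heatKernel_torus_zero (t : ℕ) (x : Torus d N) :
    heatKernel (srw d (ZMod N)) t x 0 =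
      ((N : ℝ) ^ d)⁻¹ * ∑ ξ, torusEigenvalue ξ ^ t * torusChar ξ x := by
  have hN : (N : ℝ) ≠ 0 := NeZero.ne _
  have h : ({0} : Set (Torus d N)).indicator 1 = ((N : ℝ) ^ d)⁻¹ • ∑ ξ, torusChar ξ := by
    ext z
    simp only [Pi.smul_apply, Finset.sum_apply, sum_torusChar_apply, smul_eq_mul,
      Set.indicator_apply, Set.mem_singleton_iff, Pi.one_apply]
    split_ifs <;> simp [hN]
  simp only [heatKernel, h, map_smul, map_sum, lazify_srw_pow_torusChar, Pi.smul_apply,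
    Finset.sum_apply, smul_eq_mul]

theorem cos_valMinAbs_le (j : ZMod N) :
    Real.cos (2 * Real.pi * j.valMinAbs / N) ≤ 1 - 8 / (N : ℝ) ^ 2 * (j.valMinAbs : ℝ) ^ 2 := by
  have hN : (0 : ℝ) < N := Nat.cast_pos.2 (NeZero.pos N)
  have hj : |(j.valMinAbs : ℝ)| * 2 ≤ N := by
    have := ZMod.valMinAbs_mem_Ioc j
    have : |j.valMinAbs| * 2 ≤ N := by
      rcases abs_cases j.valMinAbs with h | h <;> grind
    exact_mod_cast this
  refine (Real.cos_le_one_sub_mul_cos_sq ?_).trans_eq ?_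
  · rw [abs_div, abs_mul, abs_of_pos hN, div_le_iff₀ hN, abs_of_pos Real.two_pi_pos]
    nlinarith [Real.pi_pos]
  · have := Real.pi_pos.ne'
    field_simp
    ring

theorem torusEigenvalue_le (hd : d ≠ 0) (ξ : Torus d N) :
    torusEigenvalue ξ ≤
      Real.exp (-(4 / (d * (N : ℝ) ^ 2)) * ∑ i, ((ξ i).valMinAbs : ℝ) ^ 2) := by
  have : (0 : ℝ) < d := Nat.cast_pos.2 (Nat.pos_of_ne_zero hd)
  have hN : (0 : ℝ) < N := Nat.cast_pos.2 (NeZero.pos N)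
  have h : ∑ i, Real.cos (2 * Real.pi * (ξ i).valMinAbs / N) ≤
      d - 8 / (N : ℝ) ^ 2 * ∑ i, ((ξ i).valMinAbs : ℝ) ^ 2 := by
    refine (Finset.sum_le_sum fun i _ => cos_valMinAbs_le (ξ i)).trans_eq ?_
    rw [Finset.sum_sub_distrib, ← Finset.mul_sum]
    simp
  calc torusEigenvalue ξ
      ≤ (1 + (d : ℝ)⁻¹ * (d - 8 / (N : ℝ) ^ 2 * ∑ i, ((ξ i).valMinAbs : ℝ) ^ 2)) / 2 := by
        unfold torusEigenvalue
        gcongr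
    _ = -(4 / (d * (N : ℝ) ^ 2)) * ∑ i, ((ξ i).valMinAbs : ℝ) ^ 2 + 1 := by
        field_simp
        ring
    _ ≤ _ := Real.add_one_le_exp _

theorem torusEigenvalue_pow_le (hd : d ≠ 0) (t : ℕ) (ξ : Torus d N) :
    torusEigenvalue ξ ^ t ≤
      Real.exp (-(4 * t / (d * (N : ℝ) ^ 2) * ∑ i, ((ξ i).valMinAbs : ℝ) ^ 2)) := by
  refine (pow_le_pow_left₀ (torusEigenvalue_nonneg hd ξ) (torusEigenvalue_le hd ξ) t).trans_eq ?_
  rw [← Real.exp_nat_mul]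
  congr 1
  ring

theorem card_torus : Fintype.card (Torus d N) = N ^ d := by simp

theorem abs_torusEigenvalue_pow_mul_torusChar_le (hd : d ≠ 0) (t : ℕ) (ξ x : Torus d N) :
    |torusEigenvalue ξ ^ t * torusChar ξ x| ≤ torusEigenvalue ξ ^ t := by
  have h := pow_nonneg (torusEigenvalue_nonneg hd ξ) t
  rw [abs_mul, abs_of_nonneg h]
  exact mul_le_of_le_one_right h (abs_torusChar_le_one ξ x)

theorem abs_heatKernel_torus_sub_le (hd : d ≠ 0) (t : ℕ) (x y : Torus d N) :
    |heatKernel (srw d (ZMod N)) t x y - ((N : ℝ) ^ d)⁻¹| ≤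
      Real.exp (-(4 * t / (d * (N : ℝ) ^ 2))) := by
  have hN : (0 : ℝ) < N := Nat.cast_pos.2 (NeZero.pos N)
  have h : heatKernel (srw d (ZMod N)) t x y - ((N : ℝ) ^ d)⁻¹ = ((N : ℝ) ^ d)⁻¹ *
      ∑ ξ ∈ Finset.univ.erase 0, torusEigenvalue ξ ^ t * torusChar ξ (x - y) := by
    rw [← heatKernel_srw_sub_zero, heatKernel_torus_zero,
      ← Finset.add_sum_erase _ _ (Finset.mem_univ 0), torusEigenvalue_zero hd, torusChar_zero_left]
    ring
  rw [h, abs_mul, abs_of_pos (by positivity), inv_mul_le_iff₀ (by positivity)]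
  calc |∑ ξ ∈ Finset.univ.erase 0, torusEigenvalue ξ ^ t * torusChar ξ (x - y)|
      ≤ ∑ ξ ∈ Finset.univ.erase (0 : Torus d N), Real.exp (-(4 * t / (d * (N : ℝ) ^ 2))) := by
        refine (Finset.abs_sum_le_sum_abs _ _).trans (Finset.sum_le_sum fun ξ hξ => ?_)
        refine (abs_torusEigenvalue_pow_mul_torusChar_le hd t ξ _).trans
          ((torusEigenvalue_pow_le hd t ξ).trans (Real.exp_le_exp.2 (neg_le_neg ?_)))
        exact le_mul_of_one_le_right (by positivity)
          (one_le_sum_valMinAbs_sq (Finset.ne_of_mem_erase hξ))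
    _ ≤ ∑ _ξ : Torus d N, Real.exp (-(4 * t / (d * (N : ℝ) ^ 2))) :=
        Finset.sum_le_sum_of_subset_of_nonneg (Finset.erase_subset _ _)
          fun _ _ _ => (Real.exp_pos _).le
    _ = (N : ℝ) ^ d * Real.exp (-(4 * t / (d * (N : ℝ) ^ 2))) := by
        rw [Finset.sum_const, nsmul_eq_mul, Finset.card_univ, card_torus, Nat.cast_pow]

theorem sum_torusEigenvalue_pow_le (hd : d ≠ 0) {t : ℕ} (ht : t ≠ 0) :
    ∑ ξ : Torus d N, torusEigenvalue ξ ^ t ≤ (6 * (1 + 1 / √(4 * t / (d * (N : ℝ) ^ 2)))) ^ d := by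
  have hN : (0 : ℝ) < N := Nat.cast_pos.2 (NeZero.pos N)
  have : (0 : ℝ) < d := Nat.cast_pos.2 (Nat.pos_of_ne_zero hd)
  have : (0 : ℝ) < t := Nat.cast_pos.2 (Nat.pos_of_ne_zero ht)
  set b : ℝ := 4 * t / (d * (N : ℝ) ^ 2)
  calc ∑ ξ : Torus d N, torusEigenvalue ξ ^ t
      ≤ ∑ ξ : Torus d N, ∏ i, Real.exp (-(b * ((ξ i).valMinAbs : ℝ) ^ 2)) := by
        refine Finset.sum_le_sum fun ξ _ => (torusEigenvalue_pow_le hd t ξ).trans_eq ?_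
        rw [← Real.exp_sum, Finset.sum_neg_distrib, Finset.mul_sum]
    _ = (∑ j : ZMod N, Real.exp (-(b * (j.valMinAbs : ℝ) ^ 2))) ^ d :=
        (Fintype.sum_pow (fun j : ZMod N => Real.exp (-(b * (j.valMinAbs : ℝ) ^ 2))) d).symm
    _ ≤ (6 * (1 + 1 / √b)) ^ d := by
        gcongr
        exact sum_exp_neg_mul_valMinAbs_sq_le (by positivity)

theorem heatKernel_torus_le (hd : d ≠ 0) {t : ℕ} (ht : t ≠ 0) (x y : Torus d N) :
    heatKernel (srw d (ZMod N)) t x y ≤ (6 * d * (1 / N + 1 / √(t : ℝ))) ^ d := by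
  have hN : (0 : ℝ) < N := Nat.cast_pos.2 (NeZero.pos N)
  have hd1 : (1 : ℝ) ≤ d := Nat.one_le_cast.2 (Nat.one_le_iff_ne_zero.2 hd)
  have ht' : (0 : ℝ) < t := Nat.cast_pos.2 (Nat.pos_of_ne_zero ht)
  have hsqrt : √(t : ℝ) / (d * N) ≤ √(4 * t / (d * (N : ℝ) ^ 2)) := by
    refine Real.le_sqrt_of_sq_le ?_
    rw [div_pow, Real.sq_sqrt ht'.le, mul_pow]
    gcongr <;> nlinarith
  calc heatKernel (srw d (ZMod N)) t x y
      ≤ ((N : ℝ) ^ d)⁻¹ * ∑ ξ : Torus d N, torusEigenvalue ξ ^ t := by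
        rw [← heatKernel_srw_sub_zero, heatKernel_torus_zero]
        gcongr with ξ
        exact (le_abs_self _).trans (abs_torusEigenvalue_pow_mul_torusChar_le hd t ξ _)
    _ ≤ ((N : ℝ) ^ d)⁻¹ * (6 * (1 + 1 / (√(t : ℝ) / (d * N)))) ^ d := by
        gcongr
        refine (sum_torusEigenvalue_pow_le hd ht).trans ?_
        gcongr
    _ = (6 * (1 / N) + 6 * d * (1 / √(t : ℝ))) ^ d := by
        rw [← inv_pow, ← mul_pow]
        congr 1
        field_simp
    _ ≤ (6 * d * (1 / N + 1 / √(t : ℝ))) ^ d := by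
        rw [mul_add]
        gcongr
        linarith

end TorusFourier

/-! ### The lattice -/

section Lattice

variable {d : ℕ}

/-- The canonical projection of the lattice onto the torus. -/
def latToTorus (d N : ℕ) (x : Lat d) : Torus d N := Int.castAddHom (ZMod N) ∘ x

theorem latToTorus_sub (N : ℕ) (x y : Lat d) :
    latToTorus d N (x - y) = latToTorus d N x - latToTorus d N y :=
  funext fun _ => map_sub (Int.castAddHom (ZMod N)) _ _

/-- The nonzero points of the sublattice `N ℤ^d`, which the projection identifies with `0`. -/
def fibre (d N : ℕ) : Set (Lat d) := {w | w ≠ 0 ∧ latToTorus d N w = 0}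

theorem heatKernel_latToTorus_zero (N t : ℕ) (x : Lat d) :
    heatKernel (srw d (ZMod N)) t (latToTorus d N x) 0 =
      heatKernel (srw d ℤ) t x 0 + (lazify (srw d ℤ) ^ t) ((fibre d N).indicator 1) x := by
  have h : ({0} : Set (Torus d N)).indicator (1 : Torus d N → ℝ) ∘ latToTorus d N =
      ({0} : Set (Lat d)).indicator 1 + (fibre d N).indicator 1 := by
    have h0 : latToTorus d N 0 = 0 := by simpa using latToTorus_sub N (0 : Lat d) 0
    ext w
    simp only [Function.comp_apply, Pi.add_apply, Set.indicator_apply, Set.mem_singleton_iff,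
      fibre, Set.mem_ofPred_eq, Pi.one_apply]
    by_cases hw : w = 0
    · simp only [hw, h0, ne_eq, not_true_eq_false, false_and, if_true, if_false, add_zero]
    · simp only [hw, ne_eq, not_false_eq_true, true_and, if_false, zero_add]
  rw [heatKernel, heatKernel, ← Pi.add_apply, ← map_add, ← h]
  exact (congr_fun (lazify_pow_comp (srw_comp_map (Int.cast_one (R := ZMod N))) t _) x).symm

theorem heatKernel_lat_le_torus (hd : d ≠ 0) (N t : ℕ) (x : Lat d) :
    heatKernel (srw d ℤ) t x 0 ≤ heatKernel (srw d (ZMod N)) t (latToTorus d N x) 0 := by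
  rw [heatKernel_latToTorus_zero]
  exact le_add_of_nonneg_right (((isMarkovOperator_srw hd).lazify.pow t).map_nonneg
    (Set.indicator_nonneg fun _ _ => zero_le_one) x)

theorem one_div_sqrt_pow (t : ℝ) (ht : 0 ≤ t) : (1 / √t) ^ d = t ^ (-(d : ℝ) / 2) := by
  rw [one_div, Real.sqrt_eq_rpow, ← Real.rpow_neg ht, ← Real.rpow_natCast, ← Real.rpow_mul ht]
  congr 1
  ring

theorem heatKernel_lat_le (hd : d ≠ 0) {t : ℕ} (ht : t ≠ 0) (x y : Lat d) :
    heatKernel (srw d ℤ) t x y ≤ (6 * d) ^ d * (t : ℝ) ^ (-(d : ℝ) / 2) := by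
  have h : Tendsto (fun n : ℕ => (6 * d * (1 / ((n : ℝ) + 1) + 1 / √(t : ℝ))) ^ d) atTop
      (nhds ((6 * d * (0 + 1 / √(t : ℝ))) ^ d)) :=
    ((tendsto_one_div_add_atTop_nhds_zero_nat.add_const _).const_mul _).pow d
  rw [← one_div_sqrt_pow _ t.cast_nonneg, ← mul_pow, ← zero_add (1 / √(t : ℝ)),
    ← heatKernel_srw_sub_zero]
  refine ge_of_tendsto' h fun n => ?_
  exact_mod_cast (heatKernel_lat_le_torus hd (n + 1) t (x - y)).trans
    (heatKernel_torus_le hd ht _ _)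

theorem summable_heatKernel_lat (hd : 3 ≤ d) (x y : Lat d) :
    Summable fun t => heatKernel (srw d ℤ) t x y := by
  have hd0 : d ≠ 0 := by omega
  have hd3 : (3 : ℝ) ≤ d := mod_cast hd
  have h : Summable fun t : ℕ => (6 * d : ℝ) ^ d * (t : ℝ) ^ (-(d : ℝ) / 2) :=
    (Real.summable_nat_rpow.2 (by linarith)).mul_left _
  rw [← summable_nat_add_iff 1] at h ⊢
  exact h.of_nonneg_of_le (fun t => heatKernel_nonneg (isMarkovOperator_srw hd0) _ _ _)
    fun t => heatKernel_lat_le hd0 t.succ_ne_zero x y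

theorem exists_tsum_heatKernel_lat_le (hd : 3 ≤ d) {η : ℝ} (hη : 0 < η) (hη' : η ≤ 1 / 4) :
    ∃ C : ℝ, 0 < C ∧ ∀ t : ℕ, 1 ≤ t → ∀ x y : Lat d,
      ∑' s, heatKernel (srw d ℤ) (s + t) x y ≤ C * (t : ℝ) ^ (-((d : ℝ) / 2 - 1 - η)) := by
  have hd3 : (3 : ℝ) ≤ d := mod_cast hd
  have hS : Summable fun s : ℕ => ((s + 1 : ℕ) : ℝ) ^ (-1 - η) :=
    (summable_nat_add_iff 1).2 (Real.summable_nat_rpow.2 (by linarith))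
  have hpos : 0 < ∑' s : ℕ, ((s + 1 : ℕ) : ℝ) ^ (-1 - η) :=
    hS.tsum_pos (fun s => by positivity) 0 (by positivity)
  refine ⟨(6 * d) ^ d * ∑' s : ℕ, ((s + 1 : ℕ) : ℝ) ^ (-1 - η), by positivity,
    fun t ht x y => ?_⟩
  have hle (s : ℕ) : heatKernel (srw d ℤ) (s + t) x y ≤
      ((6 * d) ^ d * (t : ℝ) ^ (-((d : ℝ) / 2 - 1 - η))) * ((s + 1 : ℕ) : ℝ) ^ (-1 - η) := by
    have hexp : -(d : ℝ) / 2 = -((d : ℝ) / 2 - 1 - η) + (-1 - η) := by ring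
    refine (heatKernel_lat_le (by omega) (by omega) x y).trans ?_
    rw [mul_assoc, hexp, Real.rpow_add (by positivity)]
    refine mul_le_mul_of_nonneg_left (mul_le_mul ?_ ?_ (by positivity) (by positivity))
      (by positivity)
    · exact Real.rpow_le_rpow_of_nonpos (by positivity) (mod_cast Nat.le_add_left t s)
        (by linarith)
    · exact Real.rpow_le_rpow_of_nonpos (by positivity) (mod_cast Nat.add_le_add_left ht s)
        (by linarith)
  refine (((summable_nat_add_iff t).2 (summable_heatKernel_lat hd x y)).tsum_le_tsum hle
    (hS.mul_left _)).trans_eq ?_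
  rw [tsum_mul_left, mul_right_comm]

/-- The capacity of a finite subset of the lattice, as the sum of its escape probabilities. -/
def latCap (W : Finset (Lat d)) : ℝ := ∑ y ∈ W, escapeProb (srw d ℤ) (W : Set (Lat d))ᶜ y

theorem latCap_nonneg (hd : d ≠ 0) (W : Finset (Lat d)) : 0 ≤ latCap W :=
  Finset.sum_nonneg fun y _ => escapeProb_nonneg (isMarkovOperator_srw hd) _ y

/-- The squared Euclidean distance to `y`; it grows by one on average in every step of the
simple random walk. -/
def sqDist (y z : Lat d) : ℝ := ∑ i, (z i - y i : ℝ) ^ 2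

theorem srw_sqDist (hd : d ≠ 0) (y : Lat d) : srw d ℤ (sqDist y) = sqDist y + 1 := by
  have hd' : (d : ℝ) ≠ 0 := Nat.cast_ne_zero.2 hd
  have hterm (x : Lat d) (i j : Fin d) : (((x + Pi.single i 1 : Lat d) j : ℝ) - y j) ^ 2 +
      (((x - Pi.single i 1 : Lat d) j : ℝ) - y j) ^ 2 =
        2 * (x j - y j : ℝ) ^ 2 + if j = i then 2 else 0 := by
    by_cases hj : j = i
    · subst hj
      simp
      ring
    · simp [hj]
      ring
  have h (x : Lat d) (i : Fin d) :
      sqDist y (x + Pi.single i 1) + sqDist y (x - Pi.single i 1) = 2 * sqDist y x + 2 := by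
    simp only [sqDist, ← Finset.sum_add_distrib, hterm]
    simp [Finset.sum_add_distrib, Finset.mul_sum]
  ext x
  simp only [srw_apply, h, Finset.sum_const, Finset.card_univ, Fintype.card_fin, nsmul_eq_mul,
    Pi.add_apply, Pi.one_apply]
  field_simp

theorem lazify_srw_pow_sqDist (hd : d ≠ 0) (y : Lat d) (t : ℕ) :
    (lazify (srw d ℤ) ^ t) (sqDist y) = sqDist y + (t / 2 : ℝ) • 1 := by
  induction t with
  | zero => simp
  | succ t ih =>
    have hP := (isMarkovOperator_srw (R := ℤ) hd).lazify
    rw [pow_succ', Module.End.mul_apply, ih, map_add, map_smul, hP.map_one, lazify_apply,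
      srw_sqDist hd]
    push_cast
    module

theorem one_sub_le_sum_heatKernel (hd : d ≠ 0) {S : Finset (Lat d)} {y : Lat d} {r : ℝ}
    (hr : 0 < r) (hS : ∀ z ∉ S, r ^ 2 ≤ sqDist y z) (t : ℕ) :
    1 - t / (2 * r ^ 2) ≤ ∑ x ∈ S, heatKernel (srw d ℤ) t x y := by
  have hP := (isMarkovOperator_srw (R := ℤ) hd).lazify.pow t
  have hle : 1 - (r ^ 2)⁻¹ • sqDist y ≤ (S : Set (Lat d)).indicator 1 := fun z => by
    simp only [Pi.sub_apply, Pi.one_apply, Pi.smul_apply, smul_eq_mul, Set.indicator_apply,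
      Finset.mem_coe]
    split_ifs with hz
    · have : 0 ≤ sqDist y z := Finset.sum_nonneg fun _ _ => sq_nonneg _
      exact sub_le_self _ (by positivity)
    · rw [sub_nonpos, le_inv_mul_iff₀ (by positivity), mul_one]
      exact hS z hz
  have h := hP.monotone hle y
  rw [lazify_pow_indicator_apply, map_sub, map_smul, hP.map_one, lazify_srw_pow_sqDist hd] at h
  refine le_trans (le_of_eq ?_) (h.trans_eq ?_)
  · simp [sqDist]
    field_simp
  · simp [heatKernel_srw_comm t y]

theorem sq_le_sqDist {r : ℤ} (hr : 0 ≤ r) {y z : Lat d} (hy : ∀ i, |y i| ≤ r)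
    (hz : z ∉ Fintype.piFinset fun _ : Fin d => Finset.Icc (-(2 * r)) (2 * r)) :
    (r : ℝ) ^ 2 ≤ sqDist y z := by
  simp only [Fintype.mem_piFinset, Finset.mem_Icc, not_forall] at hz
  obtain ⟨i, hi⟩ := hz
  have h : r ^ 2 ≤ (z i - y i) ^ 2 := by
    rw [sq_le_sq, abs_of_nonneg hr, le_abs]
    have := abs_le.1 (hy i)
    omega
  have h' : (r : ℝ) ^ 2 ≤ (z i - y i : ℝ) ^ 2 := mod_cast h
  exact h'.trans (Finset.single_le_sum (f := fun i => (z i - y i : ℝ) ^ 2)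
    (fun _ _ => sq_nonneg _) (Finset.mem_univ i))

theorem latCap_le (hd : 2 ≤ d) {r : ℕ} (hr : 1 ≤ r) {W : Finset (Lat d)}
    (hW : ∀ y ∈ W, ∀ i, |y i| ≤ r) : latCap W ≤ 4 * 5 ^ d * (r : ℝ) ^ (d - 2) := by
  have hd0 : d ≠ 0 := by omega
  have hr1 : (1 : ℝ) ≤ r := mod_cast hr
  set S : Finset (Lat d) := Fintype.piFinset fun _ => Finset.Icc (-(2 * r : ℤ)) (2 * r)
  have hcard : (S.card : ℝ) ≤ (5 * r) ^ d := by
    have h : (2 * (r : ℤ) + 1 - -(2 * r)).toNat = 4 * r + 1 := by omega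
    simp only [S, Fintype.card_piFinset, Int.card_Icc, h, Finset.prod_const, Finset.card_univ,
      Fintype.card_fin]
    push_cast
    gcongr
    linarith
  have hgreen : ∀ y ∈ W, (r : ℝ) ^ 2 / 2 ≤ ∑ x ∈ S, greenUpTo (srw d ℤ) (r ^ 2) x y := by
    intro y hy
    have hs : ∀ s ∈ Finset.range (r ^ 2), (1 / 2 : ℝ) ≤ ∑ x ∈ S, heatKernel (srw d ℤ) s x y := by
      intro s hs
      have hsr : (s : ℝ) ≤ r ^ 2 := mod_cast (Finset.mem_range.1 hs).le
      have h := one_sub_le_sum_heatKernel hd0 (by positivity)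
        (fun z hz => by simpa using sq_le_sqDist r.cast_nonneg (hW y hy) hz) s
      have h' : (s : ℝ) / (2 * r ^ 2) ≤ 1 / 2 := by
        rw [div_le_iff₀ (by positivity)]
        linarith
      linarith
    simp only [greenUpTo]
    rw [Finset.sum_comm]
    refine le_trans (le_of_eq ?_) (Finset.card_nsmul_le_sum _ _ _ hs)
    simp [div_eq_mul_inv]
  have h := sum_escapeProb_mul_le_two_mul_card (isMarkovOperator_srw hd0) W S hgreen
  refine le_of_mul_le_mul_right (?_ : _ * ((r : ℝ) ^ 2 / 2) ≤ _) (by positivity)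
  calc latCap W * ((r : ℝ) ^ 2 / 2) ≤ 2 * (5 * r) ^ d := h.trans (by gcongr)
    _ = 4 * 5 ^ d * (r : ℝ) ^ (d - 2) * (r ^ 2 / 2) := by
      rw [mul_pow, ← Nat.sub_add_cancel hd, pow_add (r : ℝ), Nat.sub_add_cancel hd]
      ring

theorem srw_cosh (hd : d ≠ 0) (a : ℝ) (i : Fin d) :
    srw d ℤ (fun z => Real.cosh (a * z i)) =
      (1 + (Real.cosh a - 1) / d) • fun z : Lat d => Real.cosh (a * z i) := by
  have hd' : (d : ℝ) ≠ 0 := Nat.cast_ne_zero.2 hd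
  have h (x : Lat d) (j : Fin d) : Real.cosh (a * ((x + Pi.single j 1 : Lat d) i : ℝ)) +
      Real.cosh (a * ((x - Pi.single j 1 : Lat d) i : ℝ)) =
        2 * Real.cosh (a * x i) +
          if i = j then 2 * (Real.cosh a - 1) * Real.cosh (a * x i) else 0 := by
    by_cases hj : i = j
    · subst hj
      simp only [Pi.add_apply, Pi.sub_apply, Pi.single_eq_same, if_true]
      push_cast
      rw [mul_add, mul_sub, mul_one, Real.cosh_add, Real.cosh_sub]
      ring
    · simp [hj]
      ring
  ext x
  simp only [srw_apply, h, Finset.sum_add_distrib, Finset.sum_const, Finset.card_univ,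
    Fintype.card_fin, nsmul_eq_mul, Finset.sum_ite_eq, Finset.mem_univ, if_true, Pi.smul_apply,
    smul_eq_mul]
  field_simp

theorem lazify_srw_pow_cosh_le (hd : d ≠ 0) (a : ℝ) (i : Fin d) (t : ℕ) (x : Lat d) :
    (lazify (srw d ℤ) ^ t) (fun z => Real.cosh (a * z i)) x ≤
      Real.exp (t * a ^ 2 / 2) * Real.cosh (a * x i) := by
  have h1 : 0 ≤ Real.cosh a - 1 := sub_nonneg.2 (Real.one_le_cosh a)
  have h2 : (Real.cosh a - 1) / d ≤ Real.cosh a - 1 :=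
    div_le_self h1 (Nat.one_le_cast.2 (Nat.one_le_iff_ne_zero.2 hd))
  have : 0 ≤ (Real.cosh a - 1) / d := by positivity
  have h4 := Real.cosh_le_exp_half_sq a
  rw [lazify_pow_apply_of_map_eq_smul (srw_cosh hd a i), mul_div_assoc, Real.exp_nat_mul,
    Pi.smul_apply, smul_eq_mul]
  gcongr
  linarith

theorem cosh_le_exp_of_abs_le {u b : ℝ} (h : |u| ≤ b) : Real.cosh u ≤ Real.exp b := by
  rw [Real.cosh_eq]
  have h1 := Real.exp_le_exp.2 ((le_abs_self u).trans h)
  have h2 := Real.exp_le_exp.2 ((neg_le_abs u).trans h)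
  linarith

theorem exp_le_two_mul_cosh {u b : ℝ} (h : b ≤ |u|) : Real.exp b ≤ 2 * Real.cosh u := by
  rw [← Real.cosh_abs, Real.cosh_eq]
  linarith [Real.exp_le_exp.2 h, Real.exp_pos (-|u|)]

theorem indicator_fibre_le (N : ℕ) {a : ℝ} (ha : 0 ≤ a) :
    (fibre d N).indicator 1 ≤
      ∑ i, (2 * Real.exp (-(a * N))) • fun z : Lat d => Real.cosh (a * z i) := by
  have hnn (w : Lat d) (i : Fin d) : 0 ≤ 2 * Real.exp (-(a * N)) * Real.cosh (a * w i) :=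
    mul_nonneg (by positivity) (Real.cosh_pos _).le
  refine Set.indicator_le' (fun w hw => ?_) fun w _ => ?_
  · simp only [Finset.sum_apply, Pi.smul_apply, smul_eq_mul, Pi.one_apply]
    obtain ⟨i, hi⟩ := Function.ne_iff.mp hw.1
    have hdvd : (N : ℤ) ∣ w i := (ZMod.intCast_zmod_eq_zero_iff_dvd _ _).1 (congrFun hw.2 i)
    have hN : (N : ℝ) ≤ |(w i : ℝ)| :=
      mod_cast Int.le_of_dvd (abs_pos.2 hi) ((dvd_abs _ _).2 hdvd)
    refine le_trans ?_ (Finset.single_le_sum (fun i _ => hnn w i) (Finset.mem_univ i))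
    rw [mul_assoc, mul_left_comm, Real.exp_neg, le_inv_mul_iff₀ (Real.exp_pos _), mul_one]
    refine exp_le_two_mul_cosh ?_
    rw [abs_mul, abs_of_nonneg ha]
    gcongr
  · simpa using Finset.sum_nonneg fun i _ => hnn w i

theorem lazify_srw_pow_indicator_fibre_le (hd : d ≠ 0) {N : ℕ} {a : ℝ} (ha : 0 ≤ a) (t : ℕ)
    {x : Lat d} (hx : ∀ i, |x i| * 2 ≤ N) :
    (lazify (srw d ℤ) ^ t) ((fibre d N).indicator 1) x ≤
      2 * d * Real.exp (t * a ^ 2 / 2 - a * N / 2) := by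
  have hP := (isMarkovOperator_srw (R := ℤ) hd).lazify.pow t
  refine (hP.monotone (indicator_fibre_le N ha) x).trans ?_
  rw [map_sum, Finset.sum_apply]
  calc ∑ i, (lazify (srw d ℤ) ^ t)
        ((2 * Real.exp (-(a * N))) • fun z : Lat d => Real.cosh (a * z i)) x
      ≤ ∑ _i : Fin d, 2 * Real.exp (-(a * N)) *
          (Real.exp (t * a ^ 2 / 2) * Real.exp (a * N / 2)) := by
        refine Finset.sum_le_sum fun i _ => ?_
        rw [map_smul, Pi.smul_apply, smul_eq_mul]
        have h2 : |(x i : ℝ)| * 2 ≤ N := mod_cast hx i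
        have hcosh : Real.cosh (a * x i) ≤ Real.exp (a * N / 2) := by
          refine cosh_le_exp_of_abs_le ?_
          rw [abs_mul, abs_of_nonneg ha]
          nlinarith
        gcongr
        exact (lazify_srw_pow_cosh_le hd a i t x).trans (by gcongr)
    _ = 2 * d * Real.exp (t * a ^ 2 / 2 - a * N / 2) := by
        rw [Finset.sum_const, Finset.card_univ, Fintype.card_fin, nsmul_eq_mul, mul_assoc,
          ← Real.exp_add, ← Real.exp_add, mul_left_comm, mul_assoc]
        congr 3
        ring

end Lattice

/-! ### Green functions of the torus and the lattice -/

section GreenComparison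

variable {d N : ℕ}

theorem greenUpTo_latToTorus (t : ℕ) (x y : Lat d) :
    greenUpTo (srw d (ZMod N)) t (latToTorus d N x) (latToTorus d N y) =
      greenUpTo (srw d ℤ) t x y +
        ∑ s ∈ Finset.range t, (lazify (srw d ℤ) ^ s) ((fibre d N).indicator 1) (x - y) := by
  simp only [greenUpTo, ← Finset.sum_add_distrib]
  refine Finset.sum_congr rfl fun s _ => ?_
  rw [← heatKernel_srw_sub_zero, ← latToTorus_sub, heatKernel_latToTorus_zero,
    heatKernel_srw_sub_zero]

theorem greenUpTo_srw_comm (t : ℕ) (x y : Lat d) :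
    greenUpTo (srw d ℤ) t x y = greenUpTo (srw d ℤ) t y x :=
  Finset.sum_congr rfl fun s _ => heatKernel_srw_comm s x y

theorem abs_sum_escapeProb_mul_greenUpTo_torus_sub_two_le (hd : 3 ≤ d) (W : Finset (Lat d)) {t : ℕ}
    {T D : ℝ} {y : Lat d} (hy : y ∈ W)
    (hT : ∀ x, ∑' s, heatKernel (srw d ℤ) (s + t) y x ≤ T)
    (hD : ∀ x ∈ W,
      ∑ s ∈ Finset.range t, (lazify (srw d ℤ) ^ s) ((fibre d N).indicator 1) (x - y) ≤ D) :
    |∑ x ∈ W, escapeProb (srw d ℤ) (W : Set (Lat d))ᶜ x *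
        greenUpTo (srw d (ZMod N)) t (latToTorus d N x) (latToTorus d N y) - 2| ≤
      latCap W * (T + D) := by
  have hP := isMarkovOperator_srw (R := ℤ) (d := d) (by omega)
  have hlat := abs_sum_escapeProb_mul_greenUpTo_sub_two_le hP W (summable_heatKernel_lat hd) hy hT
  set F : Lat d → ℝ := fun z =>
    ∑ s ∈ Finset.range t, (lazify (srw d ℤ) ^ s) ((fibre d N).indicator 1) z
  have hF (z : Lat d) : 0 ≤ F z := Finset.sum_nonneg fun s _ =>
    (hP.lazify.pow s).map_nonneg (Set.indicator_nonneg fun _ _ => zero_le_one) z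
  have hfib : |∑ x ∈ W, escapeProb (srw d ℤ) (W : Set (Lat d))ᶜ x * F (x - y)| ≤ latCap W * D := by
    rw [abs_of_nonneg (Finset.sum_nonneg fun x _ => mul_nonneg (escapeProb_nonneg hP _ x) (hF _)),
      latCap, Finset.sum_mul]
    exact Finset.sum_le_sum fun x hx =>
      mul_le_mul_of_nonneg_left (hD x hx) (escapeProb_nonneg hP _ x)
  simp only [greenUpTo_latToTorus, greenUpTo_srw_comm t _ y, mul_add, Finset.sum_add_distrib]
  rw [add_sub_right_comm]
  exact (abs_add_le _ _).trans (add_le_add hlat hfib)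

theorem latToTorus_torusToLat [NeZero N] (x : Torus d N) : latToTorus d N (torusToLat x) = x := by
  ext i
  simp only [latToTorus, torusToLat, Function.comp]
  split_ifs <;> simp

theorem torusToLat_injective [NeZero N] :
    Function.Injective (torusToLat : Torus d N → Lat d) :=
  Function.LeftInverse.injective latToTorus_torusToLat

theorem abs_torusToLat_le [NeZero N] (x : Torus d N) (i : Fin d) :
    |torusToLat x i| ≤ torusDist 0 x := by
  have h1 : min (0 - x i).val (x i - 0).val ≤ torusDist 0 x :=
    Finset.le_sup (f := fun i => min ((0 : Torus d N) i - x i).val (x i - (0 : Torus d N) i).val)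
      (Finset.mem_univ i)
  refine le_trans ?_ (Nat.cast_le.2 h1)
  have hlt := ZMod.val_lt (x i)
  have h2 : ((x i).val : ℝ) ≤ (N : ℝ) / 2 ↔ 2 * (x i).val ≤ N := by
    rw [le_div_iff₀ two_pos, mul_comm]
    exact_mod_cast Iff.rfl
  rw [zero_sub, sub_zero, ZMod.neg_val, torusToLat, if_congr h2 rfl rfl]
  by_cases h0 : x i = 0
  · simp [h0]
  · rw [if_neg h0]
    split_ifs with h
    · rw [abs_of_nonneg (by positivity)]
      omega
    · rw [abs_of_nonpos (by omega)]
      omega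

theorem abs_torusToLat_le_of_mem_torusBall [NeZero N] {x : Torus d N} {R : ℝ}
    (hx : x ∈ torusBall 0 R) (i : Fin d) : |(torusToLat x i : ℝ)| ≤ R :=
  le_trans (mod_cast abs_torusToLat_le x i) (hx : (torusDist 0 x : ℝ) ≤ R)

theorem exists_one_div_le_heatKernel_torus [NeZero N] (hd : d ≠ 0) :
    ∃ t, ∀ x y : Torus d N, ((N : ℝ) ^ d)⁻¹ / 2 ≤ heatKernel (srw d (ZMod N)) t x y := by
  have hN : (0 : ℝ) < N := Nat.cast_pos.2 (NeZero.pos N)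
  have : (0 : ℝ) < d := Nat.cast_pos.2 (Nat.pos_of_ne_zero hd)
  have hlim : Tendsto (fun t : ℕ => Real.exp (-(4 / (d * (N : ℝ) ^ 2) * t))) atTop (nhds 0) :=
    Real.tendsto_exp_neg_atTop_nhds_zero.comp
      (tendsto_natCast_atTop_atTop.const_mul_atTop (by positivity))
  obtain ⟨t, ht⟩ := (hlim.eventually_le_const (u := ((N : ℝ) ^ d)⁻¹ / 2) (by positivity)).exists
  refine ⟨t, fun x y => ?_⟩
  rw [← mul_div_right_comm] at ht
  linarith [(abs_le.1 ((abs_heatKernel_torus_sub_le hd t x y).trans ht)).1]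

theorem summable_stayProb_torus [NeZero N] (hd : d ≠ 0) {B : Set (Torus d N)} {z : Torus d N}
    (hz : z ∉ B) (x : Torus d N) : Summable fun m => stayProb (srw d (ZMod N)) B m x := by
  have hN : (0 : ℝ) < N := Nat.cast_pos.2 (NeZero.pos N)
  obtain ⟨t, ht⟩ := exists_one_div_le_heatKernel_torus (N := N) hd
  exact summable_stayProb_of_le_heatKernel (isMarkovOperator_srw hd) hz (by positivity)
    (fun y => ht y z) x

end GreenComparison

section Parameters

variable {d : ℕ} {δ : ℝ}

theorem exists_exp_neg_rpow_le {b : ℝ} (hb : 0 < b) (hδ : 0 < δ) (p : ℝ) :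
    ∃ C : ℝ, 0 < C ∧ ∀ x : ℝ, 1 ≤ x → Real.exp (-(b * x ^ δ)) ≤ C * x ^ (-p) := by
  obtain ⟨k, hk⟩ := exists_nat_ge (p / δ)
  refine ⟨k.factorial / b ^ k, by positivity, fun x hx => ?_⟩
  have hx0 : 0 < x := by linarith
  have hpow : x ^ p ≤ (x ^ δ) ^ k := by
    rw [← Real.rpow_natCast (x ^ δ) k, ← Real.rpow_mul hx0.le]
    refine Real.rpow_le_rpow_of_exponent_le hx ?_
    rw [div_le_iff₀ hδ] at hk
    linarith
  have hexp : b ^ k * x ^ p / k.factorial ≤ Real.exp (b * x ^ δ) := by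
    refine le_trans ?_ (Real.pow_div_factorial_le_exp (b * x ^ δ) (by positivity) k)
    rw [mul_pow]
    gcongr
  rw [Real.exp_neg, Real.rpow_neg hx0.le]
  refine (inv_anti₀ (by positivity) hexp).trans_eq ?_
  rw [inv_div, mul_comm, ← div_eq_mul_inv, div_div]
  ring

theorem exists_lazify_srw_pow_indicator_fibre_le_of_le (hd : d ≠ 0) (hδ : 0 < δ) (p : ℝ) :
    ∃ C : ℝ, 0 < C ∧ ∀ N : ℕ, N ≠ 0 → ∀ s : ℕ, (s : ℝ) ≤ (N : ℝ) ^ (2 - δ) →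
      ∀ x : Lat d, (∀ i, |x i| * 2 ≤ N) →
        (lazify (srw d ℤ) ^ s) ((fibre d N).indicator 1) x ≤ C * (N : ℝ) ^ (-p) := by
  obtain ⟨C, hC, h⟩ := exists_exp_neg_rpow_le one_half_pos (half_pos hδ) p
  have : (0 : ℝ) < d := Nat.cast_pos.2 (Nat.pos_of_ne_zero hd)
  refine ⟨2 * d * (Real.exp (1 / 2) * C), by positivity, fun N hN s hs x hx => ?_⟩
  have hN1 : (1 : ℝ) ≤ N := Nat.one_le_cast.2 (Nat.one_le_iff_ne_zero.2 hN)
  have hN0 : (0 : ℝ) < N := by linarith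
  set a : ℝ := (N : ℝ) ^ (-1 + δ / 2) with ha
  have haN : a * N = (N : ℝ) ^ (δ / 2) := by
    rw [ha, ← Real.rpow_add_one hN0.ne']
    congr 1
    ring
  have hsa : s * a ^ 2 ≤ 1 := by
    calc s * a ^ 2 ≤ (N : ℝ) ^ (2 - δ) * a ^ 2 := by gcongr
      _ = 1 := by
        rw [ha, ← Real.rpow_natCast, ← Real.rpow_mul hN0.le, ← Real.rpow_add hN0]
        push_cast
        ring_nf
        exact Real.rpow_zero _
  calc (lazify (srw d ℤ) ^ s) ((fibre d N).indicator 1) x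
      ≤ 2 * d * Real.exp (s * a ^ 2 / 2 - a * N / 2) :=
        lazify_srw_pow_indicator_fibre_le hd (by positivity) s hx
    _ ≤ 2 * d * Real.exp (1 / 2 + -(1 / 2 * (N : ℝ) ^ (δ / 2))) := by
        gcongr
        linarith
    _ = 2 * d * (Real.exp (1 / 2) * Real.exp (-(1 / 2 * (N : ℝ) ^ (δ / 2)))) := by
        rw [Real.exp_add]
    _ ≤ 2 * d * (Real.exp (1 / 2) * (C * (N : ℝ) ^ (-p))) := by
        gcongr
        exact h N hN1
    _ = 2 * d * (Real.exp (1 / 2) * C) * (N : ℝ) ^ (-p) := by ring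

theorem lazify_srw_pow_indicator_fibre_le_of_ge (hd : d ≠ 0) (hδ : 0 ≤ δ) {N : ℕ} (hN : N ≠ 0)
    {s : ℕ} (hs : (N : ℝ) ^ (2 - δ) ≤ s) (x : Lat d) :
    (lazify (srw d ℤ) ^ s) ((fibre d N).indicator 1) x ≤
      (12 * d) ^ d * (N : ℝ) ^ (-(d : ℝ) + δ * d / 2) := by
  have : NeZero N := ⟨hN⟩
  have hN1 : (1 : ℝ) ≤ N := Nat.one_le_cast.2 (Nat.one_le_iff_ne_zero.2 hN)
  have hN0 : (0 : ℝ) < N := by linarith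
  have hs0 : (0 : ℝ) < s := (Real.rpow_pos_of_pos hN0 _).trans_le hs
  set b : ℝ := (N : ℝ) ^ (-1 + δ / 2) with hb
  have hNb : 1 / (N : ℝ) ≤ b := by
    rw [one_div, ← Real.rpow_neg_one]
    exact Real.rpow_le_rpow_of_exponent_le hN1 (by linarith)
  have hsb : 1 / √(s : ℝ) ≤ b := by
    rw [hb, show -1 + δ / 2 = -(1 - δ / 2) by ring, Real.rpow_neg hN0.le, one_div]
    refine inv_anti₀ (by positivity) (Real.le_sqrt_of_sq_le (le_trans (le_of_eq ?_) hs))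
    rw [← Real.rpow_natCast, ← Real.rpow_mul hN0.le]
    congr 1
    push_cast
    ring
  calc (lazify (srw d ℤ) ^ s) ((fibre d N).indicator 1) x
      ≤ heatKernel (srw d (ZMod N)) s (latToTorus d N x) 0 := by
        rw [heatKernel_latToTorus_zero]
        exact le_add_of_nonneg_left (heatKernel_nonneg (isMarkovOperator_srw hd) _ _ _)
    _ ≤ (6 * d * (1 / N + 1 / √(s : ℝ))) ^ d := heatKernel_torus_le hd (mod_cast hs0.ne') _ _
    _ ≤ (6 * d * (b + b)) ^ d := by gcongr
    _ = (12 * d) ^ d * (N : ℝ) ^ (-(d : ℝ) + δ * d / 2) := by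
        rw [show 6 * d * (b + b) = 12 * d * b by ring, mul_pow, hb, ← Real.rpow_natCast (_ ^ _) d,
          ← Real.rpow_mul hN0.le]
        congr 2
        ring

theorem exists_lazify_srw_pow_indicator_fibre_le (hd : d ≠ 0) (hδ : 0 < δ) :
    ∃ C : ℝ, 0 < C ∧ ∀ N : ℕ, N ≠ 0 → ∀ s : ℕ, ∀ x : Lat d, (∀ i, |x i| * 2 ≤ N) →
      (lazify (srw d ℤ) ^ s) ((fibre d N).indicator 1) x ≤
        C * (N : ℝ) ^ (-(d : ℝ) + δ * d / 2) := by
  obtain ⟨C, hC, h⟩ :=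
    exists_lazify_srw_pow_indicator_fibre_le_of_le hd hδ ((d : ℝ) - δ * d / 2)
  refine ⟨max C ((12 * d) ^ d), lt_max_of_lt_left hC, fun N hN s x hx => ?_⟩
  rcases le_total (s : ℝ) ((N : ℝ) ^ (2 - δ)) with hs | hs
  · rw [neg_add_eq_sub, ← neg_sub (d : ℝ)]
    exact (h N hN s hs x hx).trans (by gcongr; exact le_max_left _ _)
  · exact (lazify_srw_pow_indicator_fibre_le_of_ge hd hδ.le hN hs x).trans
      (by gcongr; exact le_max_right _ _)

/-- The time scale `N ^ (2 + δ)`, slightly longer than the mixing time of the torus. -/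
def mixTime (δ : ℝ) (N : ℕ) : ℕ := ⌈(N : ℝ) ^ (2 + δ)⌉₊

theorem rpow_le_mixTime (δ : ℝ) (N : ℕ) : (N : ℝ) ^ (2 + δ) ≤ mixTime δ N := Nat.le_ceil _

theorem one_le_mixTime {N : ℕ} (hN : N ≠ 0) : 1 ≤ mixTime δ N :=
  Nat.one_le_iff_ne_zero.2 (Nat.ceil_pos.2 (by positivity)).ne'

theorem mixTime_le (hδ : 0 ≤ δ) {N : ℕ} (hN : N ≠ 0) :
    (mixTime δ N : ℝ) ≤ 2 * (N : ℝ) ^ (2 + δ) := by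
  have h1 : 1 ≤ (N : ℝ) ^ (2 + δ) :=
    Real.one_le_rpow (Nat.one_le_cast.2 (Nat.one_le_iff_ne_zero.2 hN)) (by linarith)
  have h2 := Nat.ceil_lt_add_one (zero_le_one.trans h1)
  rw [mixTime]
  linarith

theorem exists_relaxation_mixTime_le (hd : d ≠ 0) (hδ : 0 < δ) (p : ℝ) :
    ∃ C : ℝ, 0 < C ∧ ∀ N : ℕ, N ≠ 0 →
      Real.exp (-(4 * mixTime δ N / (d * (N : ℝ) ^ 2))) * (N : ℝ) ^ d ≤ C * (N : ℝ) ^ (-p) := by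
  have : (0 : ℝ) < d := Nat.cast_pos.2 (Nat.pos_of_ne_zero hd)
  obtain ⟨C, hC, h⟩ := exists_exp_neg_rpow_le (b := 4 / d) (by positivity) hδ (d + p)
  refine ⟨C, hC, fun N hN => ?_⟩
  have hN1 : (1 : ℝ) ≤ N := Nat.one_le_cast.2 (Nat.one_le_iff_ne_zero.2 hN)
  have hN0 : (0 : ℝ) < N := by linarith
  have hexp : 4 / d * (N : ℝ) ^ δ ≤ 4 * mixTime δ N / (d * (N : ℝ) ^ 2) := by
    rw [← div_div, le_div_iff₀ (by positivity), mul_div_right_comm, mul_assoc]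
    gcongr
    refine (le_of_eq ?_).trans (rpow_le_mixTime δ N)
    rw [add_comm, Real.rpow_add hN0, Real.rpow_two]
  calc Real.exp (-(4 * mixTime δ N / (d * (N : ℝ) ^ 2))) * (N : ℝ) ^ d
      ≤ C * (N : ℝ) ^ (-(d + p)) * (N : ℝ) ^ d := by
        gcongr
        exact (Real.exp_le_exp.2 (neg_le_neg hexp)).trans (h N hN1)
    _ = C * (N : ℝ) ^ (-p) := by
        rw [← Real.rpow_natCast (N : ℝ) d, mul_assoc, ← Real.rpow_add hN0]
        congr 2
        ring

theorem exists_tsum_heatKernel_lat_mixTime_le (hd : 3 ≤ d) (hδ : 0 ≤ δ) {η : ℝ} (hη : 0 < η)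
    (hη' : η ≤ 1 / 4) :
    ∃ C : ℝ, 0 < C ∧ ∀ N : ℕ, N ≠ 0 → ∀ x y : Lat d,
      ∑' s, heatKernel (srw d ℤ) (s + mixTime δ N) x y ≤
        C * (N : ℝ) ^ (-(d - 2 : ℝ) + 2 * η) := by
  have hd3 : (3 : ℝ) ≤ d := mod_cast hd
  obtain ⟨C, hC, h⟩ := exists_tsum_heatKernel_lat_le hd hη hη'
  refine ⟨C, hC, fun N hN x y => (h _ (one_le_mixTime hN) x y).trans ?_⟩
  have hN1 : (1 : ℝ) ≤ N := Nat.one_le_cast.2 (Nat.one_le_iff_ne_zero.2 hN)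
  gcongr
  refine (Real.rpow_le_rpow_of_nonpos (by positivity) (rpow_le_mixTime δ N) (by linarith)).trans ?_
  rw [← Real.rpow_mul N.cast_nonneg]
  exact Real.rpow_le_rpow_of_exponent_le hN1 (by nlinarith)

theorem mixTime_mul_rpow_le (hδ : 0 ≤ δ) {N : ℕ} (hN : N ≠ 0) {a b : ℝ} (hab : 2 + δ + a ≤ b) :
    mixTime δ N * (N : ℝ) ^ a ≤ 2 * (N : ℝ) ^ b := by
  have hN1 : (1 : ℝ) ≤ N := Nat.one_le_cast.2 (Nat.one_le_iff_ne_zero.2 hN)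
  calc mixTime δ N * (N : ℝ) ^ a ≤ 2 * (N : ℝ) ^ (2 + δ) * (N : ℝ) ^ a := by
        gcongr
        exact mixTime_le hδ hN
    _ = 2 * (N : ℝ) ^ (2 + δ + a) := by rw [mul_assoc, ← Real.rpow_add (by linarith)]
    _ ≤ 2 * (N : ℝ) ^ b := by gcongr

theorem exists_sum_lazify_srw_pow_indicator_fibre_le (hd : d ≠ 0) (hδ : 0 < δ) :
    ∃ C : ℝ, 0 < C ∧ ∀ N : ℕ, N ≠ 0 → ∀ x : Lat d, (∀ i, |x i| * 2 ≤ N) →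
      ∑ s ∈ Finset.range (mixTime δ N), (lazify (srw d ℤ) ^ s) ((fibre d N).indicator 1) x ≤
        C * (N : ℝ) ^ (-(d - 2 : ℝ) + δ * (d + 2) / 2) := by
  obtain ⟨C, hC, h⟩ := exists_lazify_srw_pow_indicator_fibre_le hd hδ
  refine ⟨C * 2, by positivity, fun N hN x hx => ?_⟩
  refine (Finset.sum_le_card_nsmul _ _ _ fun s _ => h N hN s x hx).trans ?_
  rw [Finset.card_range, nsmul_eq_mul, mul_left_comm, mul_assoc]
  exact mul_le_mul_of_nonneg_left (mixTime_mul_rpow_le hδ.le hN (by linarith)) hC.le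

theorem exists_abs_sum_escapeProb_mul_greenUpTo_mixTime_sub_two_le (hd : 3 ≤ d) (hδ : 0 < δ)
    (hδ' : δ * (d + 2) ≤ 1) :
    ∃ C : ℝ, 0 < C ∧ ∀ N : ℕ, N ≠ 0 → ∀ W : Finset (Lat d),
      (∀ x ∈ W, ∀ y ∈ W, ∀ i, |(x - y) i| * 2 ≤ N) → ∀ y ∈ W,
        |∑ x ∈ W, escapeProb (srw d ℤ) (W : Set (Lat d))ᶜ x * greenUpTo (srw d (ZMod N))
            (mixTime δ N) (latToTorus d N x) (latToTorus d N y) - 2| ≤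
          latCap W * (C * (N : ℝ) ^ (-(d - 2 : ℝ) + δ * (d + 2) / 2)) := by
  obtain ⟨C₁, hC₁, h₁⟩ := exists_tsum_heatKernel_lat_mixTime_le hd hδ.le
    (η := δ * (d + 2) / 4) (by positivity) (by linarith)
  obtain ⟨C₂, hC₂, h₂⟩ := exists_sum_lazify_srw_pow_indicator_fibre_le (d := d) (by omega) hδ
  refine ⟨C₁ + C₂, by positivity, fun N hN W hW y hy => ?_⟩
  rw [add_mul]
  refine abs_sum_escapeProb_mul_greenUpTo_torus_sub_two_le hd W hy (fun x => ?_)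
    fun x hx => h₂ N hN _ (hW x hx y hy)
  convert h₁ N hN y x using 3
  ring

theorem latCap_mul_rpow_le (hd : 3 ≤ d) {ε : ℝ} (hε : 0 ≤ ε) (hε1 : ε ≤ 1) {N : ℕ} (hN : N ≠ 0)
    {W : Finset (Lat d)} (hW : ∀ y ∈ W, ∀ i, |(y i : ℝ)| ≤ (N : ℝ) ^ (1 - ε)) :
    latCap W * (N : ℝ) ^ (-(d - 2 : ℝ) + ε / 2) ≤ 4 * 5 ^ d * (N : ℝ) ^ (-(ε / 2)) := by
  have hd3 : (3 : ℝ) ≤ d := mod_cast hd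
  have hN1 : (1 : ℝ) ≤ N := Nat.one_le_cast.2 (Nat.one_le_iff_ne_zero.2 hN)
  have hR : 1 ≤ (N : ℝ) ^ (1 - ε) := Real.one_le_rpow hN1 (by linarith)
  have hcap : latCap W ≤ 4 * 5 ^ d * (N : ℝ) ^ ((1 - ε) * (d - 2 : ℝ)) := by
    refine (latCap_le (by omega) (r := ⌊(N : ℝ) ^ (1 - ε)⌋₊) (Nat.le_floor (mod_cast hR))
      fun y hy i => ?_).trans ?_
    · rw [Int.abs_eq_natAbs, Nat.cast_le]
      exact Nat.le_floor (by simpa [Nat.cast_natAbs] using hW y hy i)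
    · have hd2 : (d - 2 : ℝ) = (d - 2 : ℕ) := by rw [Nat.cast_sub (by omega), Nat.cast_two]
      rw [Real.rpow_mul N.cast_nonneg, hd2, Real.rpow_natCast]
      gcongr
      exact Nat.floor_le (by positivity)
  calc latCap W * (N : ℝ) ^ (-(d - 2 : ℝ) + ε / 2)
      ≤ 4 * 5 ^ d * (N : ℝ) ^ ((1 - ε) * (d - 2 : ℝ)) * (N : ℝ) ^ (-(d - 2 : ℝ) + ε / 2) := by
        gcongr
    _ = 4 * 5 ^ d * (N : ℝ) ^ ((1 - ε) * (d - 2 : ℝ) + (-(d - 2 : ℝ) + ε / 2)) := by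
        rw [mul_assoc, ← Real.rpow_add (by linarith)]
    _ ≤ 4 * 5 ^ d * (N : ℝ) ^ (-(ε / 2)) := by
        gcongr
        nlinarith

end Parameters

/-! ### Mean entrance time and capacity -/

section HittingVersusCapacity

variable {d : ℕ} {ε : ℝ}

theorem abs_unifMeanExit_torus_mul_sum_div_sub_one_le {N : ℕ} [NeZero N] (hd : d ≠ 0)
    {V : Finset (Torus d N)} (hV : V.Nonempty) (t : ℕ) {e : Torus d N → ℝ} (he : ∀ x ∈ V, 0 ≤ e x)
    {κ : ℝ} (hκ : ∀ y ∈ V, |∑ x ∈ V, e x * greenUpTo (srw d (ZMod N)) t x y - 2| ≤ κ) :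
    |unifMeanExit (srw d (ZMod N)) (V : Set (Torus d N))ᶜ * (∑ x ∈ V, e x) / (N : ℝ) ^ d - 1| ≤
      unifMeanExit (srw d (ZMod N)) (V : Set (Torus d N))ᶜ * (∑ x ∈ V, e x) / (N : ℝ) ^ d *
          (Real.exp (-(4 * t / (d * (N : ℝ) ^ 2))) * (N : ℝ) ^ d) +
        (κ + t / (N : ℝ) ^ d * ∑ x ∈ V, e x) / 2 := by
  have hN : (0 : ℝ) < (N : ℝ) ^ d := pow_pos (Nat.cast_pos.2 (NeZero.pos N)) d
  have hcard : (Fintype.card (Torus d N) : ℝ) = (N : ℝ) ^ d := mod_cast card_torus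
  obtain ⟨z, hz⟩ := hV
  have h := abs_unifMeanExit_mul_sum_sub_card_le (isMarkovOperator_srw hd) (sum_srw hd)
    (summable_stayProb_torus hd (z := z) (by simpa using hz))
    (fun x y => by rw [hcard]; exact abs_heatKernel_torus_sub_le hd t x y) he hκ
  have hsum : ∑ x, meanExit (srw d (ZMod N)) (V : Set (Torus d N))ᶜ x =
      unifMeanExit (srw d (ZMod N)) (V : Set (Torus d N))ᶜ * (N : ℝ) ^ d := by
    rw [unifMeanExit, hcard]
    field_simp
  rw [hsum, hcard] at h
  rw [div_sub_one hN.ne', abs_div, abs_of_pos hN, div_le_iff₀ hN]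
  refine h.trans_eq ?_
  field_simp

theorem rpow_one_sub_mul_four_le {N : ℕ} (hN : N ≠ 0) (h : 4 ≤ (N : ℝ) ^ ε) :
    (N : ℝ) ^ (1 - ε) * 4 ≤ N :=
  calc (N : ℝ) ^ (1 - ε) * 4 ≤ (N : ℝ) ^ (1 - ε) * (N : ℝ) ^ ε := by gcongr
    _ = N := by rw [← Real.rpow_add (by positivity), sub_add_cancel, Real.rpow_one]

theorem sum_escapeProb_torusToLat {N : ℕ} [NeZero N] (V : Finset (Torus d N)) :
    ∑ x ∈ V, escapeProb (srw d ℤ) (V.image torusToLat : Set (Lat d))ᶜ (torusToLat x) =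
      latCap (V.image torusToLat) :=
  (Finset.sum_image torusToLat_injective.injOn).symm

theorem abs_le_of_mem_image_torusToLat {N : ℕ} [NeZero N] {V : Finset (Torus d N)} {R : ℝ}
    (hV : (V : Set (Torus d N)) ⊆ torusBall 0 R) {y : Lat d} (hy : y ∈ V.image torusToLat)
    (i : Fin d) : |(y i : ℝ)| ≤ R := by
  obtain ⟨x, hx, rfl⟩ := Finset.mem_image.1 hy
  exact abs_torusToLat_le_of_mem_torusBall (hV hx) i

theorem exists_abs_sum_escapeProb_torusToLat_mul_greenUpTo_sub_two_le (hd : 3 ≤ d) (hε : 0 < ε)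
    (hε1 : ε ≤ 1) :
    ∃ C : ℝ, 0 < C ∧ ∀ N : ℕ, ∀ [NeZero N], 4 ≤ (N : ℝ) ^ ε → ∀ V : Finset (Torus d N),
      (V : Set (Torus d N)) ⊆ torusBall 0 ((N : ℝ) ^ (1 - ε)) → ∀ y ∈ V,
        |∑ x ∈ V, escapeProb (srw d ℤ) (V.image torusToLat : Set (Lat d))ᶜ (torusToLat x) *
          greenUpTo (srw d (ZMod N)) (mixTime (ε / (d + 2)) N) x y - 2| ≤
            C * (N : ℝ) ^ (-(ε / 2)) := by
  have hδε : ε / (d + 2) * (d + 2) = ε := div_mul_cancel₀ _ (by positivity)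
  obtain ⟨C, hC, h⟩ := exists_abs_sum_escapeProb_mul_greenUpTo_mixTime_sub_two_le hd
    (δ := ε / (d + 2)) (by positivity) (hδε.le.trans hε1)
  rw [hδε] at h
  refine ⟨C * (4 * 5 ^ d), by positivity, fun N _ hN4 V hV y hy => ?_⟩
  have hN : N ≠ 0 := NeZero.ne N
  have hbox : ∀ x ∈ V.image torusToLat, ∀ y ∈ V.image torusToLat, ∀ i, |(x - y) i| * 2 ≤ N := by
    intro x hx y hy i
    have hxy : |(x i : ℝ) - y i| * 2 ≤ N := by
      linarith [abs_sub (x i : ℝ) (y i), abs_le_of_mem_image_torusToLat hV hx i,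
        abs_le_of_mem_image_torusToLat hV hy i, rpow_one_sub_mul_four_le hN hN4]
    exact_mod_cast hxy
  have hy' := h N hN _ hbox _ (Finset.mem_image_of_mem torusToLat hy)
  simp only [Finset.sum_image torusToLat_injective.injOn, latToTorus_torusToLat] at hy'
  refine hy'.trans ?_
  rw [mul_left_comm, mul_assoc C]
  exact mul_le_mul_of_nonneg_left
    (latCap_mul_rpow_le hd hε.le hε1 hN fun _ => abs_le_of_mem_image_torusToLat hV) hC.le

theorem mixTime_div_mul_latCap_le (hd : 3 ≤ d) (hε : 0 ≤ ε) (hε1 : ε ≤ 1) {N : ℕ} (hN : N ≠ 0)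
    {W : Finset (Lat d)} (hW : ∀ y ∈ W, ∀ i, |(y i : ℝ)| ≤ (N : ℝ) ^ (1 - ε)) :
    mixTime (ε / (d + 2)) N / (N : ℝ) ^ d * latCap W ≤ 8 * 5 ^ d * (N : ℝ) ^ (-(ε / 2)) := by
  have hδ : ε / (d + 2) ≤ ε / 2 := by gcongr; linarith [d.cast_nonneg (α := ℝ)]
  have ht := mixTime_mul_rpow_le (δ := ε / (d + 2)) (by positivity) hN (a := -(d : ℝ))
    (b := -(d - 2 : ℝ) + ε / 2) (by linarith)
  rw [Real.rpow_neg N.cast_nonneg, Real.rpow_natCast, ← div_eq_mul_inv] at ht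
  calc mixTime (ε / (d + 2)) N / (N : ℝ) ^ d * latCap W
      ≤ 2 * (N : ℝ) ^ (-(d - 2 : ℝ) + ε / 2) * latCap W :=
        mul_le_mul_of_nonneg_right ht (latCap_nonneg (by omega) W)
    _ = 2 * (latCap W * (N : ℝ) ^ (-(d - 2 : ℝ) + ε / 2)) := by ring
    _ ≤ 2 * (4 * 5 ^ d * (N : ℝ) ^ (-(ε / 2))) :=
        mul_le_mul_of_nonneg_left (latCap_mul_rpow_le hd hε hε1 hN hW) zero_le_two
    _ = 8 * 5 ^ d * (N : ℝ) ^ (-(ε / 2)) := by ring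

theorem exists_abs_unifMeanExit_mul_latCap_div_sub_one_le (hd : 3 ≤ d) (hε : 0 < ε) (hε1 : ε ≤ 1) :
    ∃ C : ℝ, 0 < C ∧ ∀ N : ℕ, ∀ [NeZero N], 4 ≤ (N : ℝ) ^ ε → ∀ V : Finset (Torus d N),
      V.Nonempty → (V : Set (Torus d N)) ⊆ torusBall 0 ((N : ℝ) ^ (1 - ε)) →
      |unifMeanExit (srw d (ZMod N)) (V : Set (Torus d N))ᶜ * latCap (V.image torusToLat) /
          (N : ℝ) ^ d - 1| ≤
        unifMeanExit (srw d (ZMod N)) (V : Set (Torus d N))ᶜ * latCap (V.image torusToLat) /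
          (N : ℝ) ^ d * (C * (N : ℝ) ^ (-(ε / 2))) + C * (N : ℝ) ^ (-(ε / 2)) := by
  have hd0 : d ≠ 0 := by omega
  obtain ⟨C₁, hC₁, h₁⟩ :=
    exists_abs_sum_escapeProb_torusToLat_mul_greenUpTo_sub_two_le hd hε hε1
  obtain ⟨C₂, hC₂, h₂⟩ := exists_relaxation_mixTime_le hd0 (δ := ε / (d + 2)) (by positivity)
    (ε / 2)
  refine ⟨C₂ + (C₁ + 8 * 5 ^ d) / 2, by positivity, fun N _ hN4 V hV hVball => ?_⟩
  have hcap := mixTime_div_mul_latCap_le hd hε.le hε1 (NeZero.ne N)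
    fun _ => abs_le_of_mem_image_torusToLat hVball
  have h := abs_unifMeanExit_torus_mul_sum_div_sub_one_le hd0 hV _
    (fun x _ => escapeProb_nonneg (isMarkovOperator_srw hd0) _ (torusToLat x)) (h₁ N hN4 V hVball)
  rw [sum_escapeProb_torusToLat] at h
  have hX : 0 ≤ unifMeanExit (srw d (ZMod N)) (V : Set (Torus d N))ᶜ *
      latCap (V.image torusToLat) / (N : ℝ) ^ d :=
    div_nonneg (mul_nonneg (unifMeanExit_nonneg (isMarkovOperator_srw hd0) _)
      (latCap_nonneg hd0 _)) (by positivity)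
  refine h.trans (add_le_add (mul_le_mul_of_nonneg_left ((h₂ N (NeZero.ne N)).trans ?_) hX) ?_)
  · gcongr
    exact le_add_of_nonneg_right (by positivity)
  · have : 0 ≤ C₂ * (N : ℝ) ^ (-(ε / 2)) := by positivity
    linarith

theorem abs_inv_sub_one_le {X a : ℝ} (ha0 : 0 ≤ a) (ha : a ≤ 1 / 4)
    (h : |X - 1| ≤ X * a + a) : |X⁻¹ - 1| ≤ 3 * a := by
  have hX : 3 / 5 ≤ X := by
    have := (abs_le.1 h).1
    by_contra! hX
    rcases le_or_gt (-1) X with _ | _ <;> nlinarith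
  have hX0 : 0 < X := by linarith
  rw [inv_eq_one_div, div_sub_one hX0.ne', abs_div, abs_sub_comm, abs_of_pos hX0,
    div_le_iff₀ hX0]
  nlinarith

theorem eventually_le_rpow_natCast (hε : 0 < ε) (b : ℝ) : ∀ᶠ N : ℕ in atTop, b ≤ (N : ℝ) ^ ε :=
  ((tendsto_rpow_atTop hε).comp tendsto_natCast_atTop_atTop).eventually_ge_atTop b

theorem exists_forall_le_mul_rpow {S : ℕ → Set ℝ} (hS : ∀ n, n ≠ 0 → BddAbove (S n)) {C p : ℝ}
    (h : ∀ᶠ n : ℕ in atTop, ∀ a ∈ S n, a ≤ C * (n : ℝ) ^ p) :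
    ∃ C' : ℝ, 0 < C' ∧ ∀ n : ℕ, n ≠ 0 → ∀ a ∈ S n, a ≤ C' * (n : ℝ) ^ p := by
  obtain ⟨m, hm⟩ := eventually_atTop.1 h
  choose! B hB using hS
  set K : ℕ → ℝ := fun n => |B n| / (n : ℝ) ^ p
  have hK (n : ℕ) : 0 ≤ K n := by positivity
  have hsum : 0 ≤ ∑ n ∈ Finset.range m, K n := Finset.sum_nonneg fun n _ => hK n
  refine ⟨|C| + 1 + ∑ n ∈ Finset.range m, K n, by positivity, fun n hn a ha => ?_⟩
  have hn0 : 0 < (n : ℝ) ^ p := Real.rpow_pos_of_pos (Nat.cast_pos.2 (Nat.pos_of_ne_zero hn)) _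
  rcases lt_or_ge n m with hnm | hnm
  · have hle := Finset.single_le_sum (fun n _ => hK n) (Finset.mem_range.2 hnm)
    calc a ≤ |B n| := (hB n hn ha).trans (le_abs_self _)
      _ = K n * (n : ℝ) ^ p := (div_mul_cancel₀ _ hn0.ne').symm
      _ ≤ _ := by gcongr; linarith [abs_nonneg C]
  · refine (hm n hnm a ha).trans ?_
    gcongr
    linarith [le_abs_self C]

theorem torusBall_mono {N : ℕ} {R R' : ℝ} (h : R ≤ R') (x : Torus d N) :
    torusBall x R ⊆ torusBall x R' := fun _ hy => le_trans hy h

theorem exists_abs_div_unifMeanExit_mul_latCap_sub_one_le (hd : 3 ≤ d) (hε : 0 < ε)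
    (hε1 : ε ≤ 1) :
    ∃ C : ℝ, 0 < C ∧ ∀ N : ℕ, ∀ [NeZero N], ∀ V : Finset (Torus d N), V.Nonempty →
      (V : Set (Torus d N)) ⊆ torusBall 0 ((N : ℝ) ^ (1 - ε)) →
      |(N : ℝ) ^ d / (unifMeanExit (srw d (ZMod N)) (V : Set (Torus d N))ᶜ *
          latCap (V.image torusToLat)) - 1| ≤ C * (N : ℝ) ^ (-(ε / 2)) := by
  obtain ⟨C, hC, h⟩ := exists_abs_unifMeanExit_mul_latCap_div_sub_one_le hd hε hε1
  let err (N : ℕ) [NeZero N] (V : Finset (Torus d N)) : ℝ :=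
    |(N : ℝ) ^ d / (unifMeanExit (srw d (ZMod N)) (V : Set (Torus d N))ᶜ *
      latCap (V.image torusToLat)) - 1|
  let S (N : ℕ) : Set ℝ := {a | ∃ _ : NeZero N, ∃ V : Finset (Torus d N), V.Nonempty ∧
    (V : Set (Torus d N)) ⊆ torusBall 0 ((N : ℝ) ^ (1 - ε)) ∧ err N V = a}
  have hS (N : ℕ) (hN : N ≠ 0) : BddAbove (S N) := by
    have : NeZero N := ⟨hN⟩
    refine (Set.finite_range (err N)).bddAbove.mono ?_
    rintro _ ⟨_, V, -, -, rfl⟩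
    exact ⟨V, rfl⟩
  have hlarge : ∀ᶠ N : ℕ in atTop, ∀ a ∈ S N, a ≤ 3 * C * (N : ℝ) ^ (-(ε / 2)) := by
    filter_upwards [eventually_le_rpow_natCast hε 4,
      eventually_le_rpow_natCast (half_pos hε) (4 * C)] with N h4 h4C
    rintro _ ⟨_, V, hV, hVball, rfl⟩
    have hsmall : C * (N : ℝ) ^ (-(ε / 2)) ≤ 1 / 4 := by
      rw [Real.rpow_neg N.cast_nonneg, ← div_eq_mul_inv, div_le_iff₀ (by linarith)]
      linarith
    have := abs_inv_sub_one_le (by positivity) hsmall (h N h4 V hV hVball)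
    rwa [inv_div, ← mul_assoc] at this
  obtain ⟨C', hC', h'⟩ := exists_forall_le_mul_rpow hS hlarge
  exact ⟨C', hC', fun N _ V hV hVball =>
    h' N (NeZero.ne N) _ ⟨inferInstance, V, hV, hVball, rfl⟩⟩

end HittingVersusCapacity

/-! ### Walks on path space -/

section PathSpace

variable {α : Type*}

/-- The set of paths following `w` up to time `n`. -/
def pathCylinder (n : ℕ) (w : ℕ → α) : Set (ℕ → α) := {ω | ∀ k, k ≤ n → ω k = w k}

/-- The event that the path is in `B` at the times `n, …, n + m`. -/
def stayEvent (B : Set α) (n m : ℕ) : Set (ℕ → α) := {ω | ∀ k, n ≤ k → k ≤ n + m → ω k ∈ B}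

theorem pathCylinder_update (n : ℕ) (w : ℕ → α) (y : α) :
    pathCylinder (n + 1) (Function.update w (n + 1) y) =
      pathCylinder n w ∩ {ω | ω (n + 1) = y} := by
  ext ω
  constructor
  · intro h
    refine ⟨fun k hk => ?_, by simpa using h (n + 1) le_rfl⟩
    simpa [Function.update_of_ne (show k ≠ n + 1 by omega)] using h k (by omega)
  · rintro ⟨hw, hy⟩ k hk
    rcases hk.eq_or_lt with rfl | hlt
    · simpa using hy
    · rw [Function.update_of_ne hlt.ne, hw k (by omega)]

theorem pathCylinder_zero (w : ℕ → α) : pathCylinder 0 w = {ω | ω 0 = w 0} := by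
  ext ω
  simp [pathCylinder]

theorem pathCylinder_inter_stayEvent_zero {B : Set α} {n : ℕ} {w : ℕ → α} (hw : w n ∈ B) :
    pathCylinder n w ∩ stayEvent B n 0 = pathCylinder n w := by
  refine Set.inter_eq_left.2 fun ω hω k hk hk' => ?_
  obtain rfl : k = n := by omega
  rwa [hω k le_rfl]

theorem pathCylinder_inter_stayEvent_succ {B : Set α} {n : ℕ} {w : ℕ → α} (hw : w n ∈ B)
    (m : ℕ) :
    pathCylinder n w ∩ stayEvent B n (m + 1) = pathCylinder n w ∩ stayEvent B (n + 1) m := by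
  ext ω
  refine and_congr_right fun hω => ⟨fun h k hk hk' => h k (by omega) (by omega),
    fun h k hk hk' => ?_⟩
  rcases hk.eq_or_lt with rfl | hlt
  · rwa [hω n le_rfl]
  · exact h k (by omega) (by omega)

theorem pathCylinder_inter_stayEvent_of_notMem {B : Set α} {n : ℕ} {w : ℕ → α} (hw : w n ∉ B)
    (m : ℕ) : pathCylinder n w ∩ stayEvent B n m = ∅ := by
  refine Set.eq_empty_of_forall_notMem fun ω hω => hw ?_
  rw [← hω.1 n le_rfl]
  exact hω.2 n le_rfl (by omega)

theorem antitone_stayEvent (B : Set α) (n : ℕ) : Antitone (stayEvent B n) :=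
  fun _ _ h _ hω k hk hk' => hω k hk (by omega)

variable [MeasurableSpace α] [MeasurableSingletonClass α]

theorem measurableSet_coord_eq (n : ℕ) (y : α) : MeasurableSet {ω : ℕ → α | ω n = y} :=
  measurable_pi_apply (X := fun _ => α) n (measurableSet_singleton y)

variable [Countable α]

theorem measurableSet_stayEvent (B : Set α) (n m : ℕ) : MeasurableSet (stayEvent B n m) := by
  simp only [stayEvent, Set.ofPred_forall]
  exact .iInter fun k => .iInter fun _ => .iInter fun _ =>
    measurable_pi_apply k B.to_countable.measurableSet

theorem tsum_measure_inter_coord_eq (μ : Measure (ℕ → α)) (n : ℕ) (A : Set (ℕ → α)) :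
    ∑' y, μ (A ∩ {ω | ω n = y}) = μ A := by
  have h := tsum_measure_preimage_singleton (μ := μ.restrict A) Set.countable_univ
    (f := fun ω : ℕ → α => ω n) fun y _ => measurableSet_coord_eq n y
  rw [Set.preimage_univ, Measure.restrict_apply_univ,
    tsum_univ fun y => μ.restrict A ((fun ω => ω n) ⁻¹' {y})] at h
  rw [← h]
  exact tsum_congr fun y => (congrArg μ (Set.inter_comm _ _)).trans
    (Measure.restrict_apply (measurableSet_coord_eq n y)).symm

end PathSpace

section WalkLaw

variable {d : ℕ} {R : Type*} [AddCommGroupWithOne R]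

/-- The `2 d` neighbours of `x`, indexed by a direction and a sign. -/
def neighbour (x : Fin d → R) (p : Fin d × Bool) : Fin d → R :=
  x + Pi.single p.1 (if p.2 then 1 else -1)

theorem neighbour_true (x : Fin d → R) (i : Fin d) :
    neighbour x (i, true) = x + Pi.single i 1 := by
  simp [neighbour]

theorem neighbour_false (x : Fin d → R) (i : Fin d) :
    neighbour x (i, false) = x - Pi.single i 1 := by
  simp [neighbour, sub_eq_add_neg, Pi.single_neg]

theorem adj.mem_range_neighbour {x y : Fin d → R} (h : adj x y) :
    y ∈ Set.range (neighbour x) := by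
  obtain ⟨-, i, h | h, hne⟩ := h
  · refine ⟨(i, true), funext fun j => ?_⟩
    rcases eq_or_ne j i with rfl | hj
    · simp [neighbour, h]
    · simp [neighbour, hj, hne j hj]
  · refine ⟨(i, false), funext fun j => ?_⟩
    rcases eq_or_ne j i with rfl | hj
    · simp [neighbour, h]
    · simp [neighbour, hj, hne j hj]

theorem adj_neighbour (h1 : (1 : R) ≠ 0) (x : Fin d → R) (p : Fin d × Bool) :
    adj x (neighbour x p) := by
  refine ⟨fun h => h1 ?_, p.1, ?_, fun j hj => by simp [neighbour, hj]⟩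
  · have := congrFun h p.1
    rcases p with ⟨i, _ | _⟩ <;> simpa [neighbour] using this
  · rcases p with ⟨i, _ | _⟩ <;> simp [neighbour]

theorem neighbour_injective (h1 : (1 : R) ≠ 0) (h2 : (2 : R) ≠ 0) (x : Fin d → R) :
    Function.Injective (neighbour x) := by
  have h11 : (1 : R) ≠ -1 := fun h =>
    h2 (by rw [← one_add_one_eq_two, ← eq_neg_iff_add_eq_zero, ← h])
  rintro ⟨i, b⟩ ⟨j, c⟩ h
  have hi := congrFun (add_left_cancel h) i
  rcases eq_or_ne i j with rfl | hij
  · cases b <;> cases c <;> simp_all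
  · cases b <;> simp [hij, h1] at hi

theorem srwStep_neighbour (h1 : (1 : R) ≠ 0) (x : Fin d → R) (p : Fin d × Bool) :
    srwStep x (neighbour x p) = ((2 * d : ℕ) : ℝ≥0∞)⁻¹ :=
  if_pos (adj_neighbour h1 x p)

theorem support_srwStep_subset (x : Fin d → R) :
    Function.support (srwStep x) ⊆ Set.range (neighbour x) := fun y hy =>
  adj.mem_range_neighbour <| by
    by_contra h
    simp [srwStep, h] at hy

theorem tsum_srwStep_mul (hd : d ≠ 0) (h1 : (1 : R) ≠ 0) (h2 : (2 : R) ≠ 0)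
    {f : (Fin d → R) → ℝ} (hf : 0 ≤ f) (x : Fin d → R) :
    ∑' y, srwStep x y * ENNReal.ofReal (f y) = ENNReal.ofReal (srw d R f x) := by
  have hsupp : (Function.support fun y => srwStep x y * ENNReal.ofReal (f y)) ⊆
      Set.range (neighbour x) :=
    (Function.support_mul_subset_left _ _).trans (support_srwStep_subset x)
  have hinv : ((2 * d : ℕ) : ℝ≥0∞)⁻¹ = ENNReal.ofReal (2 * d : ℝ)⁻¹ := by
    rw [ENNReal.ofReal_inv_of_pos (by positivity), ← ENNReal.ofReal_natCast]
    push_cast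
    rfl
  rw [← (neighbour_injective h1 h2 x).tsum_eq hsupp, tsum_fintype, Fintype.sum_prod_type,
    srw_apply, ENNReal.ofReal_mul (by positivity), ← hinv,
    ENNReal.ofReal_sum_of_nonneg fun i _ => add_nonneg (hf _) (hf _), Finset.mul_sum]
  refine Finset.sum_congr rfl fun i _ => ?_
  rw [ENNReal.ofReal_add (hf _) (hf _), mul_add, Fintype.sum_bool]
  simp only [srwStep_neighbour h1]
  simp only [neighbour_true, neighbour_false]

theorem tsum_srwStep_le_of_two_eq_zero (h2 : (2 : R) = 0) (x : Fin d → R) :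
    ∑' y, srwStep x y ≤ 2⁻¹ := by
  have hneg : (-1 : R) = 1 := by rw [neg_eq_iff_add_eq_zero, one_add_one_eq_two, h2]
  have hle : ∀ y, srwStep x y ≤
      ∑ i : Fin d, if y = x + Pi.single i 1 then ((2 * d : ℕ) : ℝ≥0∞)⁻¹ else 0 := fun y => by
    by_cases h : adj x y
    · obtain ⟨⟨i, b⟩, rfl⟩ := h.mem_range_neighbour
      refine le_trans ?_ (Finset.single_le_sum (fun _ _ => zero_le) (Finset.mem_univ i))
      rw [srwStep, if_pos h, if_pos (by cases b <;> simp [neighbour, hneg])]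
    · simp [srwStep, h]
  calc ∑' y, srwStep x y
      ≤ ∑' y, ∑ i : Fin d, if y = x + Pi.single i 1 then ((2 * d : ℕ) : ℝ≥0∞)⁻¹ else 0 :=
        ENNReal.tsum_le_tsum hle
    _ = d * ((2 * d : ℕ) : ℝ≥0∞)⁻¹ := by
        rw [Summable.tsum_finsetSum fun _ _ => ENNReal.summable]
        simp
    _ = 2⁻¹ * (d * (d : ℝ≥0∞)⁻¹) := by
        rw [Nat.cast_mul, ENNReal.mul_inv (by simp) (by simp), Nat.cast_ofNat, mul_left_comm]
    _ ≤ 2⁻¹ := mul_le_of_le_one_right' (ENNReal.mul_inv_le_one _)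

variable [MeasurableSpace R] {μ : Measure (ℕ → (Fin d → R))} {init : (Fin d → R) → ℝ≥0∞}

theorem IsWalkLaw.measure_pathCylinder_zero (hμ : IsWalkLaw μ init) (w : ℕ → (Fin d → R)) :
    μ (pathCylinder 0 w) = init (w 0) := by
  rw [pathCylinder, hμ.2, Finset.prod_range_zero, mul_one]

theorem IsWalkLaw.measure_pathCylinder_update (hμ : IsWalkLaw μ init) (n : ℕ)
    (w : ℕ → (Fin d → R)) (y : Fin d → R) :
    μ (pathCylinder (n + 1) (Function.update w (n + 1) y)) =
      μ (pathCylinder n w) * srwStep (w n) y := by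
  have hu : ∀ k ≤ n, Function.update w (n + 1) y k = w k := fun k hk =>
    Function.update_of_ne (by omega) _ _
  rw [pathCylinder, pathCylinder, hμ.2, hμ.2, Finset.prod_range_succ, hu 0 (Nat.zero_le n),
    hu n le_rfl, Function.update_self, ← mul_assoc]
  congr 2
  refine Finset.prod_congr rfl fun k hk => ?_
  have hk' := Finset.mem_range.1 hk
  rw [hu k hk'.le, hu (k + 1) hk']

variable [Countable R] [MeasurableSingletonClass R]

theorem IsWalkLaw.measure_pathCylinder_inter (hμ : IsWalkLaw μ init) (hd : d ≠ 0)
    (h1 : (1 : R) ≠ 0) (h2 : (2 : R) ≠ 0) {n : ℕ} {w : ℕ → (Fin d → R)} {A : Set (ℕ → Fin d → R)}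
    {f : (Fin d → R) → ℝ} (hf : 0 ≤ f)
    (hA : ∀ y, μ (pathCylinder (n + 1) (Function.update w (n + 1) y) ∩ A) =
      μ (pathCylinder (n + 1) (Function.update w (n + 1) y)) * ENNReal.ofReal (f y)) :
    μ (pathCylinder n w ∩ A) = μ (pathCylinder n w) * ENNReal.ofReal (srw d R f (w n)) := by
  rw [← tsum_srwStep_mul hd h1 h2 hf, ← ENNReal.tsum_mul_left,
    ← tsum_measure_inter_coord_eq μ (n + 1)]
  refine tsum_congr fun y => ?_
  rw [Set.inter_right_comm, ← pathCylinder_update, hA, hμ.measure_pathCylinder_update, mul_assoc]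

theorem IsWalkLaw.measure_pathCylinder_inter_stayEvent (hμ : IsWalkLaw μ init) (hd : d ≠ 0)
    (h1 : (1 : R) ≠ 0) (h2 : (2 : R) ≠ 0) (B : Set (Fin d → R)) (n m : ℕ)
    (w : ℕ → (Fin d → R)) :
    μ (pathCylinder n w ∩ stayEvent B n m) =
      μ (pathCylinder n w) * ENNReal.ofReal (stayProb (srw d R) B m (w n)) := by
  induction m generalizing n w with
  | zero =>
    by_cases hw : w n ∈ B
    · simp [pathCylinder_inter_stayEvent_zero hw, stayProb, hw]
    · simp [pathCylinder_inter_stayEvent_of_notMem hw, stayProb, hw]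
  | succ m ih =>
    by_cases hw : w n ∈ B
    · rw [pathCylinder_inter_stayEvent_succ hw, stayProb, Set.indicator_of_mem hw]
      refine hμ.measure_pathCylinder_inter hd h1 h2 (stayProb_nonneg (isMarkovOperator_srw hd) B m)
        fun y => ?_
      rw [ih, Function.update_self]
    · simp [pathCylinder_inter_stayEvent_of_notMem hw, stayProb, hw]

theorem IsWalkLaw.measure_stayEvent_zero (hμ : IsWalkLaw μ init) (hd : d ≠ 0)
    (h1 : (1 : R) ≠ 0) (h2 : (2 : R) ≠ 0) (B : Set (Fin d → R)) (m : ℕ) :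
    μ (stayEvent B 0 m) = ∑' x, init x * ENNReal.ofReal (stayProb (srw d R) B m x) := by
  rw [← tsum_measure_inter_coord_eq μ 0]
  refine tsum_congr fun x => ?_
  have := hμ.measure_pathCylinder_inter_stayEvent hd h1 h2 B 0 m fun _ => x
  rwa [hμ.measure_pathCylinder_zero, pathCylinder_zero, Set.inter_comm] at this

theorem IsWalkLaw.init_mul_tsum_srwStep (hμ : IsWalkLaw μ init) (x : Fin d → R) :
    init x * ∑' y, srwStep x y = init x := by
  have h0 := hμ.measure_pathCylinder_zero fun _ => x
  rw [← tsum_measure_inter_coord_eq μ 1] at h0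
  simpa only [← pathCylinder_update, hμ.measure_pathCylinder_update,
    hμ.measure_pathCylinder_zero, ENNReal.tsum_mul_left] using h0

theorem IsWalkLaw.init_eq_zero_of_two_eq_zero (hμ : IsWalkLaw μ init) (h2 : (2 : R) = 0)
    (x : Fin d → R) : init x = 0 := by
  have := hμ.1
  have hfin : init x ≠ ∞ := by
    rw [← hμ.measure_pathCylinder_zero fun _ => x]
    exact measure_ne_top _ _
  by_contra h0
  have hone : ∑' y, srwStep x y = 1 :=
    (ENNReal.mul_right_inj h0 hfin).1 (by rw [hμ.init_mul_tsum_srwStep, mul_one])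
  exact absurd (hone ▸ tsum_srwStep_le_of_two_eq_zero h2 x) (by norm_num)

end WalkLaw

section Escape

variable {d : ℕ}

theorem iInter_stayEvent_compl_one (W : Set (Lat d)) : ⋂ m, stayEvent Wᶜ 1 m = escEvent W := by
  ext ω
  simp only [escEvent, stayEvent, Set.mem_iInter, Set.mem_ofPred_eq]
  exact ⟨fun h k hk => h k k hk (by omega), fun h m k hk _ => h k hk⟩

theorem IsWalkLaw.measure_stayEvent_one {x : Lat d} {μ : Measure (ℕ → Lat d)}
    (hμ : IsWalkLaw μ (pointInit x)) (hd : d ≠ 0) (B : Set (Lat d)) (m : ℕ) :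
    μ (stayEvent B 1 m) = ENNReal.ofReal (srw d ℤ (stayProb (srw d ℤ) B m) x) := by
  have := hμ.1
  have h0 : μ (pathCylinder 0 fun _ => x) = 1 := by
    rw [hμ.measure_pathCylinder_zero, pointInit, if_pos rfl]
  have hae : ∀ᵐ ω ∂μ, ω ∈ pathCylinder 0 fun _ => x :=
    (mem_ae_iff_prob_eq_one (pathCylinder_zero _ ▸ measurableSet_coord_eq 0 x)).2 h0
  rw [← Measure.measure_inter_eq_of_ae hae, hμ.measure_pathCylinder_inter hd one_ne_zero two_ne_zero
    (stayProb_nonneg (isMarkovOperator_srw hd) B m) fun y => ?_, h0, one_mul]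
  rw [hμ.measure_pathCylinder_inter_stayEvent hd one_ne_zero two_ne_zero, Function.update_self]

theorem IsWalkLaw.measure_escEvent {x : Lat d} {μ : Measure (ℕ → Lat d)}
    (hμ : IsWalkLaw μ (pointInit x)) (hd : d ≠ 0) (W : Set (Lat d)) :
    μ (escEvent W) = ENNReal.ofReal (escapeProb (srw d ℤ) Wᶜ x) := by
  have := hμ.1
  have hμW : Tendsto (fun m => μ (stayEvent Wᶜ 1 m)) atTop (nhds (μ (escEvent W))) := by
    rw [← iInter_stayEvent_compl_one]
    exact tendsto_measure_iInter_atTop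
      (fun m => (measurableSet_stayEvent _ _ m).nullMeasurableSet)
      (antitone_stayEvent _ _) ⟨0, measure_ne_top _ _⟩
  refine tendsto_nhds_unique hμW ?_
  simp only [hμ.measure_stayEvent_one hd]
  exact (ENNReal.continuous_ofReal.tendsto _).comp
    (tendsto_pi_nhds.1 (tendsto_map_stayProb (isMarkovOperator_srw hd) Wᶜ) x)

theorem IsCap.eq_latCap (hd : d ≠ 0) {W : Finset (Lat d)} {r : ℝ}
    (h : IsCap d (W : Set (Lat d)) r) : r = latCap W := by
  obtain ⟨μ, hμ, rfl⟩ := h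
  simp only [Finset.mem_coe]
  rw [finsum_mem_finset_eq_sum, latCap]
  refine Finset.sum_congr rfl fun x _ => ?_
  rw [(hμ x).measure_escEvent hd,
    ENNReal.toReal_ofReal (escapeProb_nonneg (isMarkovOperator_srw hd) _ x)]

end Escape

/-! ### The continuous-time walk -/

section Gaps

theorem measurableSet_forall_lt (n : ℕ) (s : ℕ → ℝ) :
    MeasurableSet {g : ℕ → ℝ | ∀ k, k ≤ n → s k < g k} := by
  simp only [Set.ofPred_forall]
  exact .iInter fun k => .iInter fun _ => measurableSet_lt measurable_const (measurable_pi_apply k)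

variable {ν : Measure (ℕ → ℝ)}

theorem IsIIDExp.ae_pos (hν : IsIIDExp ν) : ∀ᵐ g ∂ν, ∀ k, 0 < g k := by
  have := hν.1
  rw [ae_all_iff]
  intro n
  have h := hν.2 n 0 fun _ => le_rfl
  simp only [Pi.zero_apply, Finset.sum_const_zero, neg_zero, Real.exp_zero,
    ENNReal.ofReal_one] at h
  filter_upwards [(mem_ae_iff_prob_eq_one (measurableSet_forall_lt n 0)).2 h] with g hg
  exact hg n le_rfl

theorem IsIIDExp.measure_forall_lt (hν : IsIIDExp ν) (I : Finset ℕ) {s : ℝ} (hs : 0 ≤ s) :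
    ν {g | ∀ k ∈ I, s < g k} = ENNReal.ofReal (Real.exp (-s)) ^ I.card := by
  have hI : I ⊆ Finset.range (I.sup id + 1) := fun k hk =>
    Finset.mem_range.2 (Nat.lt_succ_of_le (Finset.le_sup (f := id) hk))
  have h := hν.2 (I.sup id) (fun k => if k ∈ I then s else 0) fun k => by split_ifs <;> simp [hs]
  rw [Finset.sum_ite_mem, Finset.inter_eq_right.2 hI, Finset.sum_const, nsmul_eq_mul,
    ← mul_neg, Real.exp_nat_mul, ENNReal.ofReal_pow (Real.exp_pos _).le] at h
  rw [← h]
  refine measure_congr ?_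
  filter_upwards [hν.ae_pos] with g hg
  refine propext ⟨fun h k _ => ?_, fun h k hk => ?_⟩
  · split_ifs with hk
    exacts [h k hk, hg k]
  · simpa [hk] using h k (Nat.lt_succ_iff.1 (Finset.mem_range.1 (hI hk)))

theorem IsIIDExp.measure_lt (hν : IsIIDExp ν) (k : ℕ) {s : ℝ} (hs : 0 ≤ s) :
    ν {g | s < g k} = ENNReal.ofReal (Real.exp (-s)) := by
  simpa using hν.measure_forall_lt {k} hs

theorem IsIIDExp.lintegral_gap (hν : IsIIDExp ν) (k : ℕ) :
    ∫⁻ g, ENNReal.ofReal (g k) ∂ν = 1 := by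
  rw [lintegral_eq_lintegral_meas_lt ν (hν.ae_pos.mono fun g hg => (hg k).le)
    (measurable_pi_apply k).aemeasurable,
    setLIntegral_congr_fun measurableSet_Ioi fun s hs => hν.measure_lt k (le_of_lt hs),
    ← ofReal_integral_eq_lintegral_ofReal (integrableOn_exp_neg_Ioi 0)
      (Eventually.of_forall fun s => (Real.exp_pos _).le),
    integral_exp_neg_Ioi_zero, ENNReal.ofReal_one]

theorem IsIIDExp.ae_frequently_one_lt (hν : IsIIDExp ν) :
    ∀ᵐ g ∂ν, ∃ᶠ k in atTop, 1 < g k := by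
  have := hν.1
  let A : ℕ → Set (ℕ → ℝ) := fun k => {g | 1 < g k}
  have hmeas : ∀ k, MeasurableSet (A k) := fun k =>
    measurableSet_lt measurable_const (measurable_pi_apply k)
  have hνA : ∀ k, ν (A k) = ENNReal.ofReal (Real.exp (-1)) := fun k =>
    hν.measure_lt k zero_le_one
  have hind : ProbabilityTheory.iIndepSet A ν := by
    rw [ProbabilityTheory.iIndepSet_iff_meas_biInter hmeas]
    intro I
    rw [Finset.prod_congr rfl fun k _ => hνA k, Finset.prod_const,
      ← hν.measure_forall_lt I zero_le_one]
    congr 1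
    ext g
    simp [A]
  have hlimsup : ν (limsup A atTop) = 1 := by
    refine ProbabilityTheory.measure_limsup_eq_one hmeas hind ?_
    simp only [hνA]
    exact ENNReal.tsum_const_eq_top_of_ne_zero (by simp [Real.exp_pos])
  filter_upwards
    [(mem_ae_iff_prob_eq_one (MeasurableSet.measurableSet_limsup hmeas)).2 hlimsup] with g hg
  exact mem_limsup_iff_frequently_mem.1 hg

theorem IsIIDExp.ae_tendsto_sum (hν : IsIIDExp ν) :
    ∀ᵐ g ∂ν, Tendsto (fun n => ∑ k ∈ Finset.range n, g k) atTop atTop := by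
  filter_upwards [hν.ae_frequently_one_lt, hν.ae_pos] with g hfreq hpos
  rw [← not_summable_iff_tendsto_nat_atTop_of_nonneg fun k => (hpos k).le]
  intro hsum
  have hlt : ∀ᶠ k in atTop, g k < 1 := hsum.tendsto_atTop_zero.eventually (gt_mem_nhds one_pos)
  obtain ⟨k, hk, hk'⟩ := (hfreq.and_eventually hlt).exists
  exact lt_asymm hk hk'

theorem IsIIDExp.lintegral_tsum_indicator_mul_gap (hν : IsIIDExp ν) {Ω : Type*}
    [MeasurableSpace Ω] (μ : Measure Ω) {A : ℕ → Set Ω}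
    (hA : ∀ m, MeasurableSet (A m)) :
    ∫⁻ ω, ∑' m, (A m).indicator 1 ω.1 * ENNReal.ofReal (ω.2 m) ∂(μ.prod ν) =
      ∑' m, μ (A m) := by
  have := hν.1
  have hgap : ∀ m, Measurable fun g : ℕ → ℝ => ENNReal.ofReal (g m) := fun m => by fun_prop
  have hind : ∀ m, Measurable ((A m).indicator (1 : Ω → ℝ≥0∞)) := fun m =>
    measurable_one.indicator (hA m)
  have hterm : ∀ m, Measurable fun ω : Ω × (ℕ → ℝ) =>
      (A m).indicator (1 : Ω → ℝ≥0∞) ω.1 * ENNReal.ofReal (ω.2 m) := fun m =>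
    ((hind m).comp measurable_fst).mul ((hgap m).comp measurable_snd)
  rw [lintegral_tsum fun m => (hterm m).aemeasurable]
  refine tsum_congr fun m => ?_
  rw [lintegral_prod_mul (hind m).aemeasurable (hgap m).aemeasurable, hν.lintegral_gap, mul_one,
    lintegral_indicator_one (hA m)]

end Gaps

section HittingTime

variable {d N : ℕ}

theorem nJumps_sum_range {g : ℕ → ℝ} (hg : ∀ k, 0 < g k) (n : ℕ) :
    nJumps g (∑ k ∈ Finset.range n, g k) = n := by
  have hmono : StrictMono fun n => ∑ k ∈ Finset.range n, g k :=
    strictMono_nat_of_lt_succ fun n => by simp [Finset.sum_range_succ, hg n]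
  have hIic : {m | ∑ k ∈ Finset.range m, g k ≤ ∑ k ∈ Finset.range n, g k} = Set.Iic n :=
    Set.ext fun m => hmono.le_iff_le
  rw [nJumps, hIic, csSup_Iic]

theorem sum_range_nJumps_le {g : ℕ → ℝ} (hg : ∀ k, 0 < g k)
    (hg' : Tendsto (fun n => ∑ k ∈ Finset.range n, g k) atTop atTop) {t : ℝ} (ht : 0 ≤ t) :
    ∑ k ∈ Finset.range (nJumps g t), g k ≤ t := by
  refine Nat.sSup_mem (s := {n | ∑ k ∈ Finset.range n, g k ≤ t}) ⟨0, by simpa using ht⟩ ?_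
  obtain ⟨m, hm⟩ := (hg'.eventually_gt_atTop t).exists
  refine ⟨m, fun n hn => le_of_not_gt fun hlt => ?_⟩
  have hle : ∑ k ∈ Finset.range m, g k ≤ ∑ k ∈ Finset.range n, g k :=
    Finset.sum_le_sum_of_subset_of_nonneg (Finset.range_mono hlt.le) fun k _ _ => (hg k).le
  exact (hm.trans_le hle).not_ge hn

theorem hitT_nonneg (V : Set (Torus d N)) (ω : CTPath d N) : 0 ≤ hitT V ω :=
  Real.sInf_nonneg fun _ ht => ht.1

theorem hitT_eq_sum {V : Set (Torus d N)} {X : ℕ → Torus d N} {g : ℕ → ℝ}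
    (hg : ∀ k, 0 < g k) (hg' : Tendsto (fun n => ∑ k ∈ Finset.range n, g k) atTop atTop)
    {τ : ℕ} (hτ : X τ ∈ V) (hτ' : ∀ j < τ, X j ∉ V) :
    hitT V (X, g) = ∑ k ∈ Finset.range τ, g k := by
  refine IsLeast.csInf_eq ⟨⟨Finset.sum_nonneg fun k _ => (hg k).le, ?_⟩, ?_⟩
  · rwa [ctPos, nJumps_sum_range hg]
  · rintro t ⟨ht, hmem⟩
    have hle : τ ≤ nJumps g t := not_lt.1 fun hlt => hτ' _ hlt hmem
    exact (Finset.sum_le_sum_of_subset_of_nonneg (Finset.range_mono hle)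
      fun k _ _ => (hg k).le).trans (sum_range_nJumps_le hg hg' ht)

theorem ofReal_hitT_eq_tsum {V : Set (Torus d N)} {X : ℕ → Torus d N} {g : ℕ → ℝ}
    (hg : ∀ k, 0 < g k) (hg' : Tendsto (fun n => ∑ k ∈ Finset.range n, g k) atTop atTop)
    (hX : ∃ k, X k ∈ V) :
    ENNReal.ofReal (hitT V (X, g)) =
      ∑' m, (stayEvent Vᶜ 0 m).indicator 1 X * ENNReal.ofReal (g m) := by
  have hτ' : ∀ j < Nat.find hX, X j ∉ V := fun j hj => Nat.find_min hX hj
  rw [hitT_eq_sum hg hg' (Nat.find_spec hX) hτ',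
    ENNReal.ofReal_sum_of_nonneg fun k _ => (hg k).le,
    tsum_eq_sum (s := Finset.range (Nat.find hX)) fun m hm => ?_]
  · refine Finset.sum_congr rfl fun m hm => ?_
    rw [Set.indicator_of_mem, Pi.one_apply, one_mul]
    have := Finset.mem_range.1 hm
    exact fun j _ hj => hτ' j (by omega)
  · rw [Set.indicator_of_notMem, zero_mul]
    have := mt Finset.mem_range.2 hm
    exact fun h => h _ (Nat.zero_le _) (by omega) (Nat.find_spec hX)

instance : MeasurableSingletonClass (ZMod N) := ⟨fun _ => trivial⟩

theorem zmod_one_ne_zero (hN : 2 ≤ N) : (1 : ZMod N) ≠ 0 := by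
  have : Fact (1 < N) := ⟨hN⟩
  exact one_ne_zero

theorem zmod_two_ne_zero (hN : 3 ≤ N) : (2 : ZMod N) ≠ 0 := fun h => by
  have hdvd : N ∣ 2 := (ZMod.natCast_eq_zero_iff 2 N).1 (by exact_mod_cast h)
  exact absurd (Nat.le_of_dvd two_pos hdvd) (by omega)

theorem not_isWalkLaw_unifInit_two (μ : Measure (ℕ → Torus d 2)) :
    ¬ IsWalkLaw μ (unifInit d 2) := fun hμ => by
  have h0 := hμ.init_eq_zero_of_two_eq_zero (CharTwo.two_eq_zero) 0
  simp [unifInit] at h0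

variable [NeZero N] {μ : Measure (ℕ → Torus d N)}

theorem sum_unifInit_mul {f : Torus d N → ℝ} (hf : 0 ≤ f) :
    ∑ x, unifInit d N x * ENNReal.ofReal (f x) =
      ENNReal.ofReal ((Fintype.card (Torus d N) : ℝ)⁻¹ * ∑ x, f x) := by
  have hcard : (0 : ℝ) < Fintype.card (Torus d N) := by exact_mod_cast Fintype.card_pos
  rw [ENNReal.ofReal_mul (inv_pos.2 hcard).le, ENNReal.ofReal_inv_of_pos hcard,
    ENNReal.ofReal_natCast, card_torus, ENNReal.ofReal_sum_of_nonneg fun x _ => hf x,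
    Finset.mul_sum]
  simp [unifInit]

theorem IsWalkLaw.tsum_measure_stayEvent (hμ : IsWalkLaw μ (unifInit d N)) (hd : d ≠ 0)
    (hN : 3 ≤ N) {B : Set (Torus d N)} (hB : Bᶜ.Nonempty) :
    ∑' m, μ (stayEvent B 0 m) = ENNReal.ofReal (unifMeanExit (srw d (ZMod N)) B) := by
  have hP := isMarkovOperator_srw (R := ZMod N) hd
  obtain ⟨z, hz⟩ := hB
  simp only [hμ.measure_stayEvent_zero hd (zmod_one_ne_zero (by omega)) (zmod_two_ne_zero hN)]
  rw [ENNReal.tsum_comm, tsum_fintype, unifMeanExit, ← sum_unifInit_mul (meanExit_nonneg hP B)]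
  refine Finset.sum_congr rfl fun x _ => ?_
  rw [ENNReal.tsum_mul_left, meanExit, ENNReal.ofReal_tsum_of_nonneg
    (fun m => stayProb_nonneg hP B m x) (summable_stayProb_torus hd hz x)]

theorem IsWalkLaw.ae_exists_mem (hμ : IsWalkLaw μ (unifInit d N)) (hd : d ≠ 0) (hN : 3 ≤ N)
    {V : Set (Torus d N)} (hV : V.Nonempty) : ∀ᵐ ω ∂μ, ∃ k, ω k ∈ V := by
  have hne : ∑' m, μ (stayEvent Vᶜ 0 m) ≠ ∞ := by
    rw [hμ.tsum_measure_stayEvent hd hN (by simpa using hV)]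
    exact ENNReal.ofReal_ne_top
  rw [ae_iff]
  exact le_antisymm (ge_of_tendsto' (ENNReal.tendsto_atTop_zero_of_tsum_ne_top hne)
    fun m => measure_mono fun ω hω k _ _ hk => hω ⟨k, hk⟩) zero_le

theorem integral_hitT (hd : d ≠ 0) (hN : 3 ≤ N) {V : Set (Torus d N)} (hV : V.Nonempty)
    {P : Measure (CTPath d N)} (hP : IsCTWalk P (unifInit d N)) :
    ∫ ω, hitT V ω ∂P = unifMeanExit (srw d (ZMod N)) Vᶜ := by
  obtain ⟨μ, ν, hμ, hν, rfl⟩ := hP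
  have := hμ.1
  have := hν.1
  have hae : (fun ω => ENNReal.ofReal (hitT V ω)) =ᵐ[μ.prod ν] fun ω =>
      ∑' m, (stayEvent Vᶜ 0 m).indicator 1 ω.1 * ENNReal.ofReal (ω.2 m) := by
    filter_upwards [Measure.quasiMeasurePreserving_fst.ae (hμ.ae_exists_mem hd hN hV),
      Measure.quasiMeasurePreserving_snd.ae hν.ae_pos,
      Measure.quasiMeasurePreserving_snd.ae hν.ae_tendsto_sum] with ω hX hg hg'
    exact ofReal_hitT_eq_tsum hg hg' hX
  have hmeas : AEMeasurable (fun ω => ENNReal.ofReal (hitT V ω)) (μ.prod ν) := by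
    refine AEMeasurable.congr (Measurable.aemeasurable ?_) hae.symm
    refine Measurable.tsum fun m => ?_
    exact ((measurable_one.indicator (measurableSet_stayEvent _ 0 m)).comp measurable_fst).mul
      (by fun_prop)
  calc ∫ ω, hitT V ω ∂(μ.prod ν)
      = ∫ ω, (ENNReal.ofReal (hitT V ω)).toReal ∂(μ.prod ν) := by
        simp only [ENNReal.toReal_ofReal (hitT_nonneg V _)]
    _ = (∫⁻ ω, ENNReal.ofReal (hitT V ω) ∂(μ.prod ν)).toReal :=
        integral_toReal hmeas (Eventually.of_forall fun ω => ENNReal.ofReal_lt_top)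
    _ = (ENNReal.ofReal (unifMeanExit (srw d (ZMod N)) Vᶜ)).toReal := by
        rw [lintegral_congr_ae hae, hν.lintegral_tsum_indicator_mul_gap μ
          fun m => measurableSet_stayEvent _ 0 m,
          hμ.tsum_measure_stayEvent hd hN (by simpa using hV)]
    _ = unifMeanExit (srw d (ZMod N)) Vᶜ :=
        ENNReal.toReal_ofReal (unifMeanExit_nonneg (isMarkovOperator_srw hd) _)

end HittingTime

/-- **Proposition (expected entrance time vs. capacity).**
For every nonempty `V ⊆ A = B(0, r_N)`:
`| N^d / (E[H_V] · cap(φ(V))) − 1 | ≤ c N^{−c'}`. -/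
theorem expected_hitting_vs_capacity
    (d : ℕ) (hd : 3 ≤ d) (ε : ℝ) (hε : 0 < ε ∧ ε < 1) :
    ∃ c c' : ℝ, 0 < c ∧ 0 < c' ∧ ∀ N : ℕ, 2 ≤ N →
      ∀ rN : ℝ, 1 ≤ rN → rN ≤ (N : ℝ) ^ (1 - ε) →
        ∀ V : Set (Torus d N), V.Nonempty → V ⊆ torusBall (0 : Torus d N) rN →
          ∀ P : Measure (CTPath d N), IsCTWalk P (unifInit d N) →
            ∀ r : ℝ, IsCap d (torusToLat '' V) r →
              |(N : ℝ) ^ d / ((∫ ω, hitT V ω ∂P) * r) - 1| ≤ c * (N : ℝ) ^ (-c') := by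
  have hd0 : d ≠ 0 := by omega
  obtain ⟨C, hC, hbound⟩ := exists_abs_div_unifMeanExit_mul_latCap_sub_one_le hd hε.1 hε.2.le
  refine ⟨C, ε / 2, hC, half_pos hε.1, fun N hN rN _ hrN V hV hVball P hP r hr => ?_⟩
  obtain rfl | hN3 := hN.eq_or_lt
  · -- On the torus of side `2` both signs give the same neighbour, so no walk law exists.
    obtain ⟨μ, -, hμ, -⟩ := hP
    exact absurd hμ (not_isWalkLaw_unifInit_two μ)
  have : NeZero N := ⟨by omega⟩
  rw [integral_hitT hd0 hN3 hV hP]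
  lift V to Finset (Torus d N) using V.toFinite
  rw [← Finset.coe_image] at hr
  rw [hr.eq_latCap hd0]
  exact hbound N V (by simpa using hV) (hVball.trans (torusBall_mono hrN 0))

end Frag
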